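/- arXiv:1302.3024 — 3 statements merged into one kernel-verified Lean document; each statement's English description precedes it below -/
import Mathlib

section
/- Let f, Γ, f̂, h be as produced by the blow-up construction of Theorem 4.1 for a quasiperiodically forced increasing interval map f with invariant curve Γ. Then h^{-1}(Γ) is homeomorphic to the circle T¹; more precisely, there is a homeomorphism ξ : T¹ → h^{-1}(Γ) conjugating the restriction f̂|_{h^{-1}(Γ)} to a circle homeomorphism of Denjoy type (a circle homeomorphism with irrational rotation number and a wandering open interval). -/
open Set Function MeasureTheory

noncomputable section

/-- The circle `T¹ = ℝ/ℤ`. -/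
abbrev T1 := AddCircle (1 : ℝ)

/-- The `n`-th iterate (`n ∈ ℤ`) of a bijection. -/
def zIter {X : Type*} (g : Equiv.Perm X) (n : ℤ) : X → X := fun x => (g ^ n) x

/-- A set of integers is syndetic if it has bounded gaps. -/
def ZSyndetic (S : Set ℤ) : Prop := ∃ N : ℕ, ∀ n : ℤ, ∃ k ∈ S, |k - n| ≤ (N : ℤ)

/-- A homeomorphism `α` of a metric space is almost periodic if for every `ε > 0` the set
`{n ∈ ℤ | dist(αⁿ, Id) < ε}` is syndetic. -/
def AlmostPeriodicHomeo {Θ : Type*} [MetricSpace Θ] (α : Θ ≃ₜ Θ) : Prop :=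
  ∀ ε > (0 : ℝ), ZSyndetic {n : ℤ | ∀ θ : Θ, dist (zIter α.toEquiv n θ) θ < ε}

/-- A homeomorphism is minimal if every (two-sided) orbit is dense. -/
def MinimalHomeo {Θ : Type*} [TopologicalSpace Θ] (α : Θ ≃ₜ Θ) : Prop :=
  ∀ θ : Θ, Dense (range fun n : ℤ => zIter α.toEquiv n θ)

/-- A self-map `g` of a metric space is almost periodic if its family of iterates
is (uniformly) equicontinuous. -/
def AlmostPeriodicMap {Y : Type*} [MetricSpace Y] (g : Y → Y) : Prop :=
  ∀ ε > (0 : ℝ), ∃ δ > (0 : ℝ), ∀ y y' : Y, dist y y' < δ → ∀ n : ℕ, dist (g^[n] y) (g^[n] y') < ε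

/-- `h` is a factor map (semiconjugacy) from `(X, f)` onto `(Y, g)`:
a continuous surjection with `h ∘ f = g ∘ h`.  Then `(X, f)` is a topological
extension of `(Y, g)`. -/
def IsFactorMap {X Y : Type*} [TopologicalSpace X] [TopologicalSpace Y]
    (f : X → X) (g : Y → Y) (h : X → Y) : Prop :=
  Continuous h ∧ Surjective h ∧ h ∘ f = g ∘ h

/-- A map `h` is almost 1-1 if the set of points of the target having exactly one
preimage is dense. -/
def AlmostOneOne {X Y : Type*} [TopologicalSpace Y] (h : X → Y) : Prop :=
  Dense {y : Y | ∃! x, h x = y}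

/-- A witness that the system `(X, f)` is almost automorphic: an almost periodic
homeomorphism of a compact metric space which is an almost 1-1 factor of `(X, f)`. -/
structure AAWitness {X : Type*} [TopologicalSpace X] (f : X → X) where
  (Y : Type)
  [mY : MetricSpace Y]
  [cY : CompactSpace Y]
  (g : Y ≃ₜ Y)
  (hmap : X → Y)
  (factor : IsFactorMap f (⇑g) hmap)
  (a11 : AlmostOneOne hmap)
  (ap : ∀ ε > (0 : ℝ), ∃ δ > (0 : ℝ), ∀ y y' : Y, dist y y' < δ →
        ∀ n : ℤ, dist (zIter g.toEquiv n y) (zIter g.toEquiv n y') < ε)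

/-- `M` is a minimal set of `f`: nonempty, closed, invariant, and without proper
nonempty closed invariant subsets. -/
def IsMinimalSet {X : Type*} [TopologicalSpace X] (f : X → X) (M : Set X) : Prop :=
  M.Nonempty ∧ IsClosed M ∧ f '' M = M ∧
    ∀ M' ⊆ M, M'.Nonempty → IsClosed M' → f '' M' ⊆ M' → M' = M

/-- The restriction of `f` to an invariant set. -/
def restrictMap {X : Type*} {f : X → X} {M : Set X} (hM : Set.MapsTo f M M) : ↥M → ↥M :=
  Set.MapsTo.restrict f M M hM

/-- `M` is an almost automorphic minimal set of `f`: `f` restricted to `M` admits an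
almost periodic almost 1-1 factor. -/
def IsAAMinimal {X : Type*} [MetricSpace X] (f : X → X) (M : Set X) : Prop :=
  IsMinimalSet f M ∧ ∀ hM : Set.MapsTo f M M, Nonempty (AAWitness (restrictMap hM))

/-- `M` is an almost periodic minimal set of `f`: the family of iterates of the
restriction of `f` to `M` is equicontinuous. -/
def IsAPMinimal {X : Type*} [MetricSpace X] (f : X → X) (M : Set X) : Prop :=
  IsMinimalSet f M ∧ ∀ hM : Set.MapsTo f M M, AlmostPeriodicMap (restrictMap hM)

/-- A subset of a product is pinched if some fibre is a singleton. -/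
def Pinched {Θ X : Type*} (A : Set (Θ × X)) : Prop := ∃ θ : Θ, ∃! x : X, (θ, x) ∈ A

/-- An `α`-forced increasing interval map on `Θ × I`: a continuous skew product over `α`
whose fibre maps are strictly increasing. -/
def ForcedIncreasing {Θ : Type*} [TopologicalSpace Θ] {I : Set ℝ} (α : Θ → Θ)
    (f : Θ × ↥I → Θ × ↥I) : Prop :=
  Continuous f ∧ (∀ p : Θ × ↥I, (f p).1 = α p.1) ∧
    ∀ θ : Θ, StrictMono fun x : ↥I => (f (θ, x)).2

/-- The fibre of `M ⊆ Θ × I` over `θ`, as a set of reals. -/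
def fiberSet {Θ : Type*} {I : Set ℝ} (M : Set (Θ × ↥I)) (θ : Θ) : Set ℝ :=
  (fun x : ↥I => (x : ℝ)) '' {x : ↥I | (θ, x) ∈ M}

/-- The filled-in envelope `[φ⁻_M, φ⁺_M]` of `M`, where `φ⁻_M(θ) = inf M_θ` and
`φ⁺_M(θ) = sup M_θ`. -/
def FilledEnvelope {Θ : Type*} {I : Set ℝ} (M : Set (Θ × ↥I)) : Set (Θ × ↥I) :=
  {p : Θ × ↥I | sInf (fiberSet M p.1) ≤ (p.2 : ℝ) ∧ (p.2 : ℝ) ≤ sSup (fiberSet M p.1)}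

/-- The graph of a curve `γ : Θ → I`. -/
def curveGraph {Θ : Type*} {I : Set ℝ} (γ : Θ → ↥I) : Set (Θ × ↥I) :=
  {p : Θ × ↥I | p.2 = γ p.1}

/-- The conclusion of the blow-up construction (properties (i)-(v) of the main theorem):
`f̂` is a topological extension of `f` via the fibre-respecting factor map `h`, `f̂` is an
`α`-forced increasing interval map, the fibre maps of `h` are non-decreasing, `h` is
injective off `h⁻¹(Γ)`, countably many points of `Γ` have non-degenerate vertical-segment
preimages while all other points of `Γ` have singleton preimages, and `h⁻¹(Γ)` contains
the graph of no continuous curve. -/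
def BlowUpConclusion {Θ : Type*} [TopologicalSpace Θ] {I : Set ℝ}
    (α : Θ → Θ) (f : Θ × ↥I → Θ × ↥I) (γ : Θ → ↥I)
    (fhat : Θ × ↥I → Θ × ↥I) (h : Θ × ↥I → Θ × ↥I) : Prop :=
  IsFactorMap fhat f h ∧ (∀ p : Θ × ↥I, (h p).1 = p.1) ∧
  ForcedIncreasing α fhat ∧
  (∀ θ : Θ, Monotone fun x : ↥I => (h (θ, x)).2) ∧
  Set.InjOn h (h ⁻¹' curveGraph γ)ᶜ ∧
  (∃ C : Set (Θ × ↥I), C ⊆ curveGraph γ ∧ C.Countable ∧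
    (∀ p ∈ C, ∃ x₁ x₂ : ↥I, x₁ < x₂ ∧ h ⁻¹' {p} = {p.1} ×ˢ Set.Icc x₁ x₂) ∧
    (∀ p ∈ curveGraph γ \ C, ∃ x : ↥I, h ⁻¹' {p} = {(p.1, x)})) ∧
  (∀ η : Θ → ↥I, Continuous η → ¬ (curveGraph η ⊆ h ⁻¹' curveGraph γ))


/-- The identification of `T¹` with `[0,1)`. -/
def lift1 : T1 → ℝ := fun x => ((AddCircle.equivIco 1 0 x : ↥(Set.Ico (0:ℝ) (0+1))) : ℝ)

/-- A circle homeomorphism is of Denjoy type if it has irrational rotation number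
(witnessed by a monotone degree-one lift) and a wandering open interval (arc). -/
def DenjoyType (f : T1 ≃ₜ T1) : Prop :=
  (∃ F : CircleDeg1Lift, (∀ t : ℝ, ((F t : ℝ) : T1) = f ((t : ℝ) : T1)) ∧
      Irrational F.translationNumber) ∧
  ∃ a b : ℝ, a < b ∧ b < a + 1 ∧
    ∀ m n : ℤ, m ≠ n →
      Disjoint (zIter f.toEquiv m '' ((fun t : ℝ => ((t : ℝ) : T1)) '' Set.Ioo a b))
               (zIter f.toEquiv n '' ((fun t : ℝ => ((t : ℝ) : T1)) '' Set.Ioo a b))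

namespace Blow

/-! ### Sawtooth functions on the circle -/

def qf : T1 → ℝ := AddCircle.liftIco 1 0 (fun s : ℝ => s * (1 - s))
def mf : T1 → ℝ := AddCircle.liftIco 1 0 (fun s : ℝ => s * s * (1 - s))

lemma qf_cont : Continuous qf := by
  apply AddCircle.liftIco_continuous
  · norm_num
  · fun_prop

lemma mf_cont : Continuous mf := by
  apply AddCircle.liftIco_continuous
  · norm_num
  · fun_prop

lemma coe_int (k : ℤ) : ((k : ℝ) : T1) = 0 := by
  rw [AddCircle.coe_eq_zero_iff]
  exact ⟨k, by simp⟩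

lemma coe_fract (s : ℝ) : ((Int.fract s : ℝ) : T1) = (s : T1) := by
  have : s = Int.fract s + (⌊s⌋ : ℤ) := (Int.fract_add_floor s).symm
  conv_rhs => rw [this]
  rw [AddCircle.coe_add, coe_int, add_zero]

lemma fract_mem (s : ℝ) : Int.fract s ∈ Set.Ico (0:ℝ) (0 + 1) :=
  ⟨Int.fract_nonneg s, by simpa using Int.fract_lt_one s⟩

lemma qf_coe (s : ℝ) : qf (s : T1) = Int.fract s * (1 - Int.fract s) := by
  rw [← coe_fract s, qf, AddCircle.liftIco_coe_apply (fract_mem s)]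

lemma mf_coe (s : ℝ) : mf (s : T1) = Int.fract s * Int.fract s * (1 - Int.fract s) := by
  rw [← coe_fract s, mf, AddCircle.liftIco_coe_apply (fract_mem s)]

lemma exists_coe (θ : T1) : ∃ s : ℝ, (s : T1) = θ := QuotientAddGroup.mk_surjective θ

lemma mf_nonneg (θ : T1) : 0 ≤ mf θ := by
  obtain ⟨s, rfl⟩ := exists_coe θ
  rw [mf_coe]
  have := Int.fract_nonneg s
  have := Int.fract_lt_one s
  have : 0 ≤ 1 - Int.fract s := by linarith
  positivity

lemma mf_le (θ : T1) : mf θ ≤ qf θ := by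
  obtain ⟨s, rfl⟩ := exists_coe θ
  rw [mf_coe, qf_coe]
  have h1 := Int.fract_nonneg s
  have h2 := Int.fract_lt_one s
  have : 0 ≤ 1 - Int.fract s := by linarith
  have : 0 ≤ Int.fract s * (1 - Int.fract s) := by positivity
  nlinarith

lemma qf_nonneg (θ : T1) : 0 ≤ qf θ := (mf_nonneg θ).trans (mf_le θ)

lemma fract_zero_of_qf {s : ℝ} (h : qf (s : T1) = 0) : Int.fract s = 0 := by
  rw [qf_coe] at h
  have h2 := Int.fract_lt_one s
  rcases mul_eq_zero.1 h with h | h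
  · exact h
  · linarith

lemma qf_eq_zero {θ : T1} (h : qf θ = 0) : θ = 0 := by
  obtain ⟨s, rfl⟩ := exists_coe θ
  rw [← coe_fract, fract_zero_of_qf h]; rfl

lemma saw_eq {s t : ℝ} (h : t * qf (s : T1) = mf (s : T1)) (hs : Int.fract s ≠ 0) :
    t = Int.fract s := by
  rw [qf_coe, mf_coe] at h
  have h2 := Int.fract_lt_one s
  have h3 : Int.fract s * (1 - Int.fract s) ≠ 0 := mul_ne_zero hs (by linarith)
  apply mul_right_cancel₀ h3
  linarith

lemma saw_le {s s' t t' : ℝ} (h0 : 0 ≤ t) (h1 : t' ≤ 1)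
    (h : t * qf (s : T1) = mf (s : T1)) (h' : t' * qf (s' : T1) = mf (s' : T1)) (hlt : s < s') :
    t' - t ≤ s' - s := by
  have e1 := Int.fract_add_floor s
  have e2 := Int.fract_add_floor s'
  have l1 := Int.fract_lt_one s
  have hfl : ⌊s⌋ ≤ ⌊s'⌋ := Int.floor_mono hlt.le
  have hfl' : (⌊s⌋ : ℝ) ≤ ⌊s'⌋ := by exact_mod_cast hfl
  by_cases hs : Int.fract s = 0
  · by_cases hs' : Int.fract s' = 0
    · have : (⌊s⌋ : ℝ) < ⌊s'⌋ := by linarith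
      have : ⌊s⌋ < ⌊s'⌋ := by exact_mod_cast this
      have : (⌊s⌋ : ℝ) + 1 ≤ ⌊s'⌋ := by exact_mod_cast this
      linarith
    · rw [saw_eq h' hs']; linarith
  · rw [saw_eq h hs]
    by_cases hs' : Int.fract s' = 0
    · have h5 : (⌊s⌋ : ℝ) < ⌊s'⌋ := by
        have := Int.floor_le s
        have : 0 ≤ Int.fract s := Int.fract_nonneg s
        rcases this.lt_or_eq with h | h
        · linarith
        · exact absurd h.symm hs
      have : ⌊s⌋ < ⌊s'⌋ := by exact_mod_cast h5
      have : (⌊s⌋ : ℝ) + 1 ≤ ⌊s'⌋ := by exact_mod_cast this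
      linarith
    · rw [saw_eq h' hs']; linarith

lemma base_mono {m q y y' t t' : ℝ} (hm : 0 ≤ m) (hmq : m ≤ q) (hy : y < y')
    (h0' : 0 ≤ t') (h1 : t ≤ 1)
    (h : t * (q + |y|) = m + max y 0) (h' : t' * (q + |y'|) = m + max y' 0) : t ≤ t' := by
  have hq : 0 ≤ q := hm.trans hmq
  have hD : 0 ≤ q + |y| := by positivity
  have hD' : 0 ≤ q + |y'| := by positivity
  rcases hD.eq_or_lt with hD | hD
  · have : y = 0 := by
      have := abs_nonneg y
      exact abs_eq_zero.1 (by linarith)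
    subst this
    have : q = 0 := by simpa using hD.symm
    subst this
    have : m = 0 := by linarith
    subst this
    rw [abs_of_pos hy, max_eq_left hy.le] at h'
    have : t' = 1 := by
      apply mul_right_cancel₀ hy.ne'; linarith
    linarith
  rcases hD'.eq_or_lt with hD' | hD'
  · have : y' = 0 := by
      have := abs_nonneg y'
      exact abs_eq_zero.1 (by linarith)
    subst this
    have : q = 0 := by simpa using hD'.symm
    subst this
    have : m = 0 := by linarith
    subst this
    rw [abs_of_neg hy, max_eq_right hy.le] at h
    have : t = 0 := by
      apply mul_right_cancel₀ hy.ne; linarith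
    linarith
  have e1 : t = (m + max y 0) / (q + |y|) := by rw [← h]; field_simp
  have e2 : t' = (m + max y' 0) / (q + |y'|) := by rw [← h']; field_simp
  rw [e1, e2, div_le_div_iff₀ hD hD']
  rcases le_total 0 y with hy0 | hy0
  · have hy0' : 0 ≤ y' := by linarith
    rw [abs_of_nonneg hy0, abs_of_nonneg hy0', max_eq_left hy0, max_eq_left hy0']
    nlinarith [mul_nonneg (sub_nonneg.2 hmq) (sub_nonneg.2 hy.le)]
  · rw [abs_of_nonpos hy0, max_eq_right hy0]
    rcases le_total 0 y' with hy0' | hy0'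
    · rw [abs_of_nonneg hy0', max_eq_left hy0']
      nlinarith [mul_nonneg (sub_nonneg.2 hmq) hy0', mul_nonneg hm (neg_nonneg.2 hy0),
        mul_nonneg hy0' (neg_nonneg.2 hy0)]
    · rw [abs_of_nonpos hy0', max_eq_right hy0']
      nlinarith [mul_nonneg hm (sub_nonneg.2 hy.le)]

/-! ### Weights -/

abbrev TT := ℤ → unitInterval

def wt : ℤ → ℝ := (posSumOfEncodable (half_pos (one_pos (α := ℝ))) ℤ).1

lemma wt_pos (n : ℤ) : 0 < wt n := (posSumOfEncodable (half_pos (one_pos (α := ℝ))) ℤ).2.1 n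

lemma wt_summable : Summable wt := by
  obtain ⟨c, hc, -⟩ := (posSumOfEncodable (half_pos (one_pos (α := ℝ))) ℤ).2.2
  exact hc.summable

lemma wt_tsum : ∑' n, wt n ≤ 1 / 2 := by
  obtain ⟨c, hc, h⟩ := (posSumOfEncodable (half_pos (one_pos (α := ℝ))) ℤ).2.2
  exact hc.tsum_eq.trans_le h

def SS (τ : TT) : ℝ := ∑' n, wt n * (τ n : ℝ)

lemma SS_summable (τ : TT) : Summable fun n => wt n * (τ n : ℝ) :=
  Summable.of_nonneg_of_le (fun n => mul_nonneg (wt_pos n).le (τ n).2.1)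
    (fun n => mul_le_of_le_one_right (wt_pos n).le (τ n).2.2) wt_summable

lemma SS_cont : Continuous SS := by
  apply continuous_tsum (u := wt) (fun i => by fun_prop) wt_summable
  intro n τ
  rw [Real.norm_of_nonneg (mul_nonneg (wt_pos n).le (τ n).2.1)]
  exact mul_le_of_le_one_right (wt_pos n).le (τ n).2.2

lemma SS_nonneg (τ : TT) : 0 ≤ SS τ := tsum_nonneg fun n => mul_nonneg (wt_pos n).le (τ n).2.1

lemma SS_diff {τ τ' : TT} {δ : ℝ} (hδ : 0 ≤ δ) (h : ∀ n, (τ' n : ℝ) - τ n ≤ δ) :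
    SS τ' - SS τ ≤ δ / 2 := by
  have h1 : SS τ' ≤ ∑' n, (wt n * (τ n : ℝ) + wt n * δ) := by
    apply Summable.tsum_le_tsum _ (SS_summable τ') ((SS_summable τ).add (wt_summable.mul_right δ))
    intro n
    rw [← mul_add]
    exact mul_le_mul_of_nonneg_left (by linarith [h n]) (wt_pos n).le
  rw [Summable.tsum_add (SS_summable τ) (wt_summable.mul_right δ), tsum_mul_right] at h1
  have := mul_le_mul_of_nonneg_right wt_tsum hδ
  unfold SS at *
  linarith

lemma SS_le (τ : TT) : SS τ ≤ 1 / 2 := by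
  have h := SS_diff (τ := fun _ => 0) (τ' := τ) (δ := 1) zero_le_one (fun n => by
    simpa using (τ n).2.2)
  have : SS (fun _ => 0) = 0 := by simp [SS]
  linarith

lemma SS_mono {τ τ' : TT} (h : τ ≤ τ') : SS τ ≤ SS τ' :=
  Summable.tsum_le_tsum (fun n => mul_le_mul_of_nonneg_left (h n) (wt_pos n).le)
    (SS_summable τ) (SS_summable τ')

lemma SS_strict {τ τ' : TT} (h : τ < τ') : SS τ < SS τ' := by
  obtain ⟨h1, i, hi⟩ := Pi.lt_def.1 h
  exact Summable.tsum_lt_tsum (i := i)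
    (fun n => mul_le_mul_of_nonneg_left (h1 n) (wt_pos n).le)
    (mul_lt_mul_of_pos_left hi (wt_pos i)) (SS_summable τ) (SS_summable τ')

lemma SS_update (τ : TT) (r : unitInterval) :
    SS (Function.update τ 0 r) = SS (Function.update τ 0 0) + wt 0 * r := by
  have h : ∀ n, wt n * ((Function.update τ 0 r n : unitInterval) : ℝ) =
      wt n * ((Function.update τ 0 0 n : unitInterval) : ℝ) +
        (if n = 0 then wt 0 * (r : ℝ) else 0) := by
    intro n
    by_cases hn : n = 0
    · subst hn; simp
    · simp [hn]
  unfold SS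
  simp_rw [h]
  rw [Summable.tsum_add (SS_summable _)]
  · rw [tsum_ite_eq]
  · exact (hasSum_ite_eq (0 : ℤ) (wt 0 * (r : ℝ))).summable

lemma wt_lt (n : ℤ) : wt n ≤ 1 / 2 :=
  (wt_summable.le_tsum n (fun j _ => (wt_pos j).le)).trans wt_tsum

/-! ### Connectedness of the total space -/

lemma exists_sol {N D : ℝ} (h0 : 0 ≤ N) (h1 : N ≤ D) : ∃ t : unitInterval, (t : ℝ) * D = N := by
  rcases (h0.trans h1).eq_or_lt with h | h
  · exact ⟨0, by simp; linarith⟩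
  · exact ⟨⟨N / D, div_nonneg h0 h.le, (div_le_one h).2 h1⟩, by simp; field_simp⟩

lemma conn {A : Type*} [TopologicalSpace A] [CompactSpace A] [T2Space A] [ConnectedSpace A]
    (N D : ℤ → A → ℝ) (hN : ∀ n, Continuous (N n)) (hD : ∀ n, Continuous (D n))
    (h0 : ∀ n x, 0 ≤ N n x) (h1 : ∀ n x, N n x ≤ D n x) :
    ConnectedSpace {e : A × TT // ∀ n, (e.2 n : ℝ) * D n e.1 = N n e.1} := by
  set Q := {e : A × TT // ∀ n, (e.2 n : ℝ) * D n e.1 = N n e.1}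
  have hcl : IsClosed {e : A × TT | ∀ n, (e.2 n : ℝ) * D n e.1 = N n e.1} := by
    rw [Set.ofPred_forall]
    refine isClosed_iInter fun n => ?_
    have := hN n
    have := hD n
    exact isClosed_eq (by fun_prop) (by fun_prop)
  have : CompactSpace Q := isCompact_iff_compactSpace.1 hcl.isCompact
  let p : Q → A := fun e => e.1.1
  have hp : Continuous p := by fun_prop
  have hsurj : Surjective p := by
    intro x
    choose t ht using fun n => exists_sol (h0 n x) (h1 n x)
    exact ⟨⟨(x, t), ht⟩, rfl⟩
  have hfib : ∀ x, IsConnected (p ⁻¹' {x}) := by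
    intro x
    refine ⟨hsurj x, ?_⟩
    have key : IsPreconnected (Set.univ.pi fun n => {t : unitInterval | (t : ℝ) * D n x = N n x}) := by
      apply isPreconnected_univ_pi
      intro n
      by_cases hd : D n x = 0
      · have : {t : unitInterval | (t : ℝ) * D n x = N n x} = Set.univ := by
          ext t
          have := h0 n x
          have := h1 n x
          simp [hd]; linarith
        rw [this]; exact isPreconnected_univ
      · apply Set.Subsingleton.isPreconnected
        intro t ht t' ht'
        exact Subtype.ext (mul_right_cancel₀ hd (ht.trans ht'.symm))
    have hind : Topology.IsInducing (Subtype.val : Q → A × TT) := ⟨rfl⟩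
    refine hind.isPreconnected_image.1 ?_
    have : (Subtype.val '' (p ⁻¹' {x})) = (fun τ : TT => (x, τ)) ''
        (Set.univ.pi fun n => {t : unitInterval | (t : ℝ) * D n x = N n x}) := by
      ext ⟨y, τ⟩
      constructor
      · rintro ⟨⟨⟨y', τ'⟩, he⟩, h, h'⟩
        obtain rfl : y' = x := h
        obtain ⟨rfl, rfl⟩ := Prod.mk.inj h'
        exact ⟨τ', fun n _ => he n, rfl⟩
      · rintro ⟨τ', h, h'⟩
        obtain ⟨rfl, rfl⟩ := Prod.mk.inj h'
        exact ⟨⟨(x, τ'), fun n => h n trivial⟩, rfl, rfl⟩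
    rw [this]
    exact key.image _ (by fun_prop)
  have hq : Topology.IsQuotientMap p := hp.isClosedMap.isQuotientMap hp hsurj
  have := Topology.IsCoinducing.isConnected_preimage_of_isClosed hfib hq.isCoinducing isClosed_univ
    isConnected_univ
  rw [preimage_univ] at this
  exact connectedSpace_iff_univ.2 this

end Blow

namespace Blow

/-! ### The Denjoy circle -/

abbrev KK (ρ : ℝ) := {e : T1 × TT // ∀ n : ℤ, (e.2 n : ℝ) * qf (e.1 - ((n * ρ : ℝ) : T1)) =
  mf (e.1 - ((n * ρ : ℝ) : T1))}

def shift (k : ℤ) (τ : TT) : TT := fun n => τ (n - k)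

lemma shift_cont (k : ℤ) : Continuous (shift k) := by
  unfold shift; fun_prop

lemma shift_mono (k : ℤ) {τ τ' : TT} (h : τ ≤ τ') : shift k τ ≤ shift k τ' := fun n => h _

lemma shift_neg (k : ℤ) (τ : TT) : shift (-k) (shift k τ) = τ := by
  funext n; simp [shift]

variable {ρ : ℝ}

lemma KK_closed (ρ : ℝ) : IsClosed {e : T1 × TT | ∀ n : ℤ, (e.2 n : ℝ) * qf (e.1 - ((n * ρ : ℝ) : T1)) =
    mf (e.1 - ((n * ρ : ℝ) : T1))} := by
  rw [Set.ofPred_forall]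
  refine isClosed_iInter fun n => ?_
  have := qf_cont
  have := mf_cont
  exact isClosed_eq (by fun_prop) (by fun_prop)

instance : CompactSpace (KK ρ) := isCompact_iff_compactSpace.1 (KK_closed ρ).isCompact

def shiftK (k : ℤ) (e : KK ρ) : KK ρ :=
  ⟨(e.1.1 + ((k * ρ : ℝ) : T1), shift k e.1.2), by
    intro n
    have := e.2 (n - k)
    have h2 : e.1.1 + ((k * ρ : ℝ) : T1) - ((n * ρ : ℝ) : T1) =
        e.1.1 - (((n - k : ℤ) * ρ : ℝ) : T1) := by
      push_cast
      rw [sub_mul, AddCircle.coe_sub]; abel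
    simp only [h2, shift]
    exact this⟩

lemma shiftK_cont (k : ℤ) : Continuous (shiftK (ρ := ρ) k) := by
  have := shift_cont k
  unfold shiftK
  fun_prop

lemma shiftK_neg (k : ℤ) (e : KK ρ) : shiftK (-k) (shiftK k e) = e := by
  apply Subtype.ext
  apply Prod.ext
  · simp only [shiftK]
    push_cast
    rw [neg_mul, AddCircle.coe_neg]; abel
  · simp only [shiftK, shift_neg]

def shiftH : KK ρ ≃ₜ KK ρ where
  toFun := shiftK 1
  invFun := shiftK (-1)
  left_inv := shiftK_neg 1
  right_inv := by
    intro e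
    have := shiftK_neg (-1) e
    rwa [neg_neg] at this
  continuous_toFun := shiftK_cont 1
  continuous_invFun := shiftK_cont (-1)

lemma mul_irr (hρ : Irrational ρ) {m n : ℤ} (h : ((m * ρ : ℝ) : T1) = ((n * ρ : ℝ) : T1)) : m = n := by
  by_contra hne
  rw [← sub_eq_zero, ← AddCircle.coe_sub, AddCircle.coe_eq_zero_iff] at h
  obtain ⟨k, hk⟩ := h
  have h2 : ((m - n : ℤ) : ℝ) * ρ = k := by push_cast; simp at hk; linarith
  have h3 : Irrational (((m - n : ℤ) : ℝ) * ρ) := hρ.intCast_mul (sub_ne_zero.2 hne)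
  rw [h2] at h3
  exact h3.ne_int k rfl

/-- Over one base point, two sequences that agree outside the orbit are comparable. -/
lemma seq_total (hρ : Irrational ρ) {θ : T1} {τ τ' : TT}
    (h : ∀ n : ℤ, θ ≠ ((n * ρ : ℝ) : T1) → τ n = τ' n) : τ = τ' ∨ τ < τ' ∨ τ' < τ := by
  by_cases hall : ∀ n : ℤ, θ ≠ ((n * ρ : ℝ) : T1)
  · exact Or.inl (funext fun n => h n (hall n))
  push Not at hall
  obtain ⟨k, hk⟩ := hall
  have h' : ∀ n, n ≠ k → τ n = τ' n := by
    intro n hn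
    apply h
    rw [hk]
    intro h
    exact hn (mul_irr hρ h).symm
  rcases lt_trichotomy (τ k) (τ' k) with hl | hl | hl
  · refine Or.inr (Or.inl (Pi.lt_def.2 ⟨fun n => ?_, k, hl⟩))
    by_cases hn : n = k
    · subst hn; exact hl.le
    · exact (h' n hn).le
  · refine Or.inl (funext fun n => ?_)
    by_cases hn : n = k
    · subst hn; exact hl
    · exact (h' n hn)
  · refine Or.inr (Or.inr (Pi.lt_def.2 ⟨fun n => ?_, k, hl⟩))
    by_cases hn : n = k
    · subst hn; exact hl.le
    · exact (h' n hn).ge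

lemma KK_total (hρ : Irrational ρ) {e e' : KK ρ} (h : e.1.1 = e'.1.1) :
    e.1.2 = e'.1.2 ∨ e.1.2 < e'.1.2 ∨ e'.1.2 < e.1.2 := by
  apply seq_total hρ (θ := e.1.1)
  intro n hn
  have h1 := e.2 n
  have h2 := e'.2 n
  rw [← h] at h2
  have h3 : qf (e.1.1 - ((n * ρ : ℝ) : T1)) ≠ 0 := fun hh => hn (sub_eq_zero.1 (qf_eq_zero hh))
  exact Subtype.ext (mul_right_cancel₀ h3 (h1.trans h2.symm))

lemma KK_lt {e e' : KK ρ} {s s' : ℝ} (hs : (s : T1) = e.1.1) (hs' : (s' : T1) = e'.1.1)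
    (hlt : s < s') : s' - s - (SS e'.1.2 - SS e.1.2) ≥ (s' - s) / 2 := by
  have : SS e'.1.2 - SS e.1.2 ≤ (s' - s) / 2 := by
    apply SS_diff (by linarith)
    intro n
    have h1 := e.2 n
    have h2 := e'.2 n
    rw [← hs, ← AddCircle.coe_sub] at h1
    rw [← hs', ← AddCircle.coe_sub] at h2
    have := saw_le (e.1.2 n).2.1 (e'.1.2 n).2.2 h1 h2 (by linarith)
    linarith
  linarith

def chi (e : KK ρ) : T1 := e.1.1 - ((SS e.1.2 : ℝ) : T1)

lemma chi_cont : Continuous (chi (ρ := ρ)) := by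
  have := SS_cont
  unfold chi
  have h : Continuous fun e : KK ρ => ((SS e.1.2 : ℝ) : T1) :=
    (AddCircle.continuous_mk' 1).comp (this.comp (by fun_prop))
  exact Continuous.sub (by fun_prop) h

lemma coe_ne_zero' {x : ℝ} (h0 : 0 < x) (h1 : x < 1) : (x : T1) ≠ 0 := by
  intro h
  rw [AddCircle.coe_eq_zero_iff] at h
  obtain ⟨k, hk⟩ := h
  simp at hk
  rw [← hk] at h0 h1
  have : 0 < k := by exact_mod_cast h0
  have : k < 1 := by exact_mod_cast h1
  omega

lemma chi_inj (hρ : Irrational ρ) : Injective (chi (ρ := ρ)) := by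
  intro e e' h
  obtain ⟨s, hs⟩ := exists_coe e.1.1
  obtain ⟨s₁, hs₁⟩ := exists_coe e'.1.1
  set δ := Int.fract (s₁ - s) with hδ
  have hs' : ((s + δ : ℝ) : T1) = e'.1.1 := by
    rw [AddCircle.coe_add, hδ, coe_fract, AddCircle.coe_sub, hs, hs₁]; abel
  have hz : ((δ - (SS e'.1.2 - SS e.1.2) : ℝ) : T1) = 0 := by
    have h2 : chi e' - chi e = 0 := by rw [h, sub_self]
    rw [← h2, chi, chi, ← hs, ← hs']
    rw [← AddCircle.coe_sub, ← AddCircle.coe_sub, ← AddCircle.coe_sub]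
    congr 1; ring
  have hδ0 : 0 ≤ δ := Int.fract_nonneg _
  have hδ1 : δ < 1 := Int.fract_lt_one _
  rcases hδ0.eq_or_lt with h0 | h0
  · rw [← h0, add_zero] at hs'
    have hb : e.1.1 = e'.1.1 := hs.symm.trans hs'
    rcases KK_total hρ hb with h3 | h3 | h3
    · exact Subtype.ext (Prod.ext hb h3)
    · exfalso
      have h4 := SS_strict h3
      have := SS_nonneg e.1.2
      have := SS_le e'.1.2
      apply coe_ne_zero' (x := SS e'.1.2 - SS e.1.2) (by linarith) (by linarith)
      have : ((-(SS e'.1.2 - SS e.1.2) : ℝ) : T1) = 0 := by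
        rw [← hz]; congr 1; linarith
      rwa [AddCircle.coe_neg, neg_eq_zero] at this
    · exfalso
      have h4 := SS_strict h3
      have := SS_nonneg e'.1.2
      have := SS_le e.1.2
      apply coe_ne_zero' (x := SS e.1.2 - SS e'.1.2) (by linarith) (by linarith)
      rw [← hz]; congr 1; linarith
  · exfalso
    have h1 := KK_lt hs hs' (by linarith)
    have hs'' : ((s + δ - 1 : ℝ) : T1) = e'.1.1 := by
      rw [AddCircle.coe_sub, AddCircle.coe_period, sub_zero, hs']
    have h2 := KK_lt hs'' hs (by linarith)
    exact coe_ne_zero' (by linarith) (by linarith) hz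

lemma chi_surj : Surjective (chi (ρ := ρ)) := by
  intro t
  obtain ⟨t, rfl⟩ := exists_coe t
  have hq := qf_cont
  have hm := mf_cont
  have hcoe : Continuous fun s : unitInterval => ((s : ℝ) : T1) :=
    (AddCircle.continuous_mk' 1).comp continuous_subtype_val
  have hc := conn (A := unitInterval)
    (fun n s => mf (((s : ℝ) : T1) - ((n * ρ : ℝ) : T1)))
    (fun n s => qf (((s : ℝ) : T1) - ((n * ρ : ℝ) : T1)))
    (fun n => hm.comp (by fun_prop)) (fun n => hq.comp (by fun_prop))
    (fun n s => mf_nonneg _) (fun n s => mf_le _)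
  set Q := {e : unitInterval × TT // ∀ n : ℤ,
    (e.2 n : ℝ) * (qf (((e.1 : ℝ) : T1) - ((n * ρ : ℝ) : T1))) =
      mf (((e.1 : ℝ) : T1) - ((n * ρ : ℝ) : T1))}
  let φ : Q → ℝ := fun e => (e.1.1 : ℝ) - SS e.1.2
  have hφ : Continuous φ := by
    have := SS_cont
    fun_prop
  choose τ hτ using fun n : ℤ => exists_sol (mf_nonneg ((0:T1) - ((n * ρ : ℝ) : T1))) (mf_le _)
  let e0 : Q := ⟨(0, τ), fun n => hτ n⟩
  let e1 : Q := ⟨(1, τ), fun n => by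
    have : (((1 : unitInterval) : ℝ) : T1) = 0 := AddCircle.coe_period 1
    simp only [this]
    exact hτ n⟩
  have h0 : φ e0 = - SS τ := by simp [φ, e0]
  have h1 : φ e1 = 1 - SS τ := by simp [φ, e1]
  set t' := Int.fract (t + SS τ) - SS τ with ht'
  have hmem : t' ∈ Set.Icc (φ e0) (φ e1) := by
    have := Int.fract_nonneg (t + SS τ)
    have := Int.fract_lt_one (t + SS τ)
    rw [h0, h1]; constructor <;> linarith
  obtain ⟨e, he⟩ := mem_range_of_exists_le_of_exists_ge hφ ⟨e0, hmem.1⟩ ⟨e1, hmem.2⟩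
  refine ⟨⟨(((e.1.1 : ℝ) : T1), e.1.2), e.2⟩, ?_⟩
  have : ((φ e : ℝ) : T1) = (t : T1) := by
    rw [he, ht', AddCircle.coe_sub, coe_fract, AddCircle.coe_add]; abel
  rw [← this]
  simp only [chi, φ]
  rw [AddCircle.coe_sub]

def chiH (hρ : Irrational ρ) : KK ρ ≃ₜ T1 :=
  Continuous.homeoOfEquivCompactToT2 (f := Equiv.ofBijective chi ⟨chi_inj hρ, chi_surj⟩) chi_cont

lemma chiH_apply (hρ : Irrational ρ) (e : KK ρ) : chiH hρ e = chi e := rfl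

def gH (hρ : Irrational ρ) : T1 ≃ₜ T1 := (chiH hρ).symm.trans (shiftH.trans (chiH hρ))

lemma gH_symm (hρ : Irrational ρ) (t : T1) :
    (chiH hρ).symm (gH hρ t) = shiftK 1 ((chiH hρ).symm t) := by
  simp [gH]; rfl

def sl (hρ : Irrational ρ) (t : ℝ) : ℝ := t + SS ((chiH hρ).symm (t : T1)).1.2

def Gl (hρ : Irrational ρ) (t : ℝ) : ℝ :=
  sl hρ t + ρ - SS (shift 1 ((chiH hρ).symm (t : T1)).1.2)

lemma sl_coe (hρ : Irrational ρ) (t : ℝ) : ((sl hρ t : ℝ) : T1) = ((chiH hρ).symm (t : T1)).1.1 := by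
  have h : chi ((chiH hρ).symm (t : T1)) = t := (chiH hρ).apply_symm_apply t
  rw [chi, sub_eq_iff_eq_add] at h
  rw [sl, AddCircle.coe_add, h]

lemma sl_mono (hρ : Irrational ρ) : Monotone (sl hρ) := by
  intro t t' h
  by_contra hlt
  push Not at hlt
  have := KK_lt (sl_coe hρ t') (sl_coe hρ t) hlt
  unfold sl at this hlt
  linarith

lemma Gl_mono (hρ : Irrational ρ) : Monotone (Gl hρ) := by
  intro t t' h
  rcases (sl_mono hρ h).eq_or_lt with heq | hlt
  · have hb : ((chiH hρ).symm (t : T1)).1.1 = ((chiH hρ).symm (t' : T1)).1.1 := by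
      rw [← sl_coe, ← sl_coe, heq]
    have hle : ((chiH hρ).symm (t' : T1)).1.2 ≤ ((chiH hρ).symm (t : T1)).1.2 := by
      rcases KK_total hρ hb with h3 | h3 | h3
      · exact h3.ge
      · have := SS_strict h3
        unfold sl at heq
        exfalso; linarith
      · exact h3.le
    have := SS_mono (shift_mono 1 hle)
    unfold Gl; linarith
  · have h1 : ((sl hρ t + ρ : ℝ) : T1) = (shiftK 1 ((chiH hρ).symm (t : T1))).1.1 := by
      rw [AddCircle.coe_add, sl_coe]; simp [shiftK]
    have h2 : ((sl hρ t' + ρ : ℝ) : T1) = (shiftK 1 ((chiH hρ).symm (t' : T1))).1.1 := by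
      rw [AddCircle.coe_add, sl_coe]; simp [shiftK]
    have := KK_lt h1 h2 (by linarith)
    simp only [shiftK] at this
    unfold Gl; linarith

lemma Gl_coe (hρ : Irrational ρ) (t : ℝ) : ((Gl hρ t : ℝ) : T1) = gH hρ (t : T1) := by
  have : gH hρ (t : T1) = chi (shiftK 1 ((chiH hρ).symm (t : T1))) := rfl
  rw [this, Gl, AddCircle.coe_sub, AddCircle.coe_add, sl_coe]
  simp [chi, shiftK]

lemma sl_Gl (hρ : Irrational ρ) (t : ℝ) : sl hρ (Gl hρ t) = sl hρ t + ρ := by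
  rw [sl, Gl_coe, gH_symm]
  simp only [shiftK, Gl]; ring

lemma sl_add_one (hρ : Irrational ρ) (t : ℝ) : sl hρ (t + 1) = sl hρ t + 1 := by
  rw [sl, sl, AddCircle.coe_add_period]; ring

lemma Gl_add_one (hρ : Irrational ρ) (t : ℝ) : Gl hρ (t + 1) = Gl hρ t + 1 := by
  rw [Gl, Gl, AddCircle.coe_add_period, sl_add_one]; ring

lemma gH_iter (hρ : Irrational ρ) (m : ℤ) (t : T1) :
    ((chiH hρ).symm (zIter (gH hρ).toEquiv m t)).1.1 =
      ((chiH hρ).symm t).1.1 + ((m * ρ : ℝ) : T1) := by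
  have hone : ∀ t : T1, ((chiH hρ).symm ((gH hρ) t)).1.1 = ((chiH hρ).symm t).1.1 + (ρ : T1) := by
    intro t
    rw [gH_symm]; simp [shiftK]
  unfold zIter
  induction m using Int.induction_on with
  | zero => simp
  | succ i ih =>
    rw [add_comm, zpow_add, zpow_one, Equiv.Perm.mul_apply]
    refine (hone _).trans ?_
    rw [ih]; push_cast
    rw [add_mul, AddCircle.coe_add, one_mul]; abel
  | pred i ih =>
    have h : ((gH hρ).toEquiv ^ (-(i:ℤ))) t =
        (gH hρ) (((gH hρ).toEquiv ^ (-(i:ℤ) - 1)) t) := by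
      have : ((gH hρ).toEquiv ^ (-(i:ℤ))) = (gH hρ).toEquiv * (gH hρ).toEquiv ^ (-(i:ℤ) - 1) := by
        rw [← zpow_one_add]; congr 1; ring
      rw [this]; rfl
    rw [h, hone] at ih
    rw [← eq_sub_iff_add_eq] at ih
    rw [ih]; push_cast
    rw [sub_mul, AddCircle.coe_sub, one_mul]; abel

lemma gH_denjoy (hρ : Irrational ρ) : DenjoyType (gH hρ) := by
  constructor
  · let G : CircleDeg1Lift := ⟨⟨Gl hρ, Gl_mono hρ⟩, Gl_add_one hρ⟩
    let S : CircleDeg1Lift := ⟨⟨sl hρ, sl_mono hρ⟩, sl_add_one hρ⟩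
    refine ⟨G, Gl_coe hρ, ?_⟩
    have h : Function.Semiconj S G (CircleDeg1Lift.translate (Multiplicative.ofAdd ρ)) := by
      intro t
      rw [CircleDeg1Lift.translate_apply]
      exact (sl_Gl hρ t).trans (add_comm _ _)
    rw [CircleDeg1Lift.translationNumber_eq_of_semiconj h,
      CircleDeg1Lift.translationNumber_translate]
    exact hρ
  · choose τ hτ using fun n : ℤ => exists_sol (mf_nonneg ((0:T1) - ((n * ρ : ℝ) : T1))) (mf_le _)
    have hK : ∀ r : unitInterval, ∀ n : ℤ, ((Function.update τ 0 r n : unitInterval) : ℝ) *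
        qf ((0:T1) - ((n * ρ : ℝ) : T1)) = mf ((0:T1) - ((n * ρ : ℝ) : T1)) := by
      intro r n
      by_cases hn : n = 0
      · subst hn
        have h1 : qf ((0:ℝ) : T1) = 0 := by rw [qf_coe]; simp
        have h2 : mf ((0:ℝ) : T1) = 0 := by rw [mf_coe]; simp
        have h3 : (0:T1) - (((0:ℤ) * ρ : ℝ) : T1) = ((0:ℝ) : T1) := by simp
        rw [h3, h1, h2, mul_zero]
      · rw [Function.update_of_ne hn]; exact hτ n
    let A := SS (Function.update τ 0 0)
    have hw := wt_pos 0
    have hw' := wt_lt 0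
    refine ⟨-A - wt 0, -A, by linarith, by linarith, ?_⟩
    have hbase : ∀ t ∈ Set.Ioo (-A - wt 0) (-A), ((chiH hρ).symm (t : T1)).1.1 = 0 := by
      intro t ht
      let r : unitInterval := ⟨(-A - t) / wt 0, div_nonneg (by linarith [ht.2]) hw.le,
        (div_le_one hw).2 (by linarith [ht.1])⟩
      let e : KK ρ := ⟨(0, Function.update τ 0 r), hK r⟩
      have : chiH hρ e = (t : T1) := by
        rw [chiH_apply, chi]
        simp only [e]
        rw [SS_update, zero_sub, ← AddCircle.coe_neg]
        congr 1
        simp only [r]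
        field_simp
        simp only [A]; ring
      rw [← this, Homeomorph.symm_apply_apply]
    intro m n hmn
    rw [Set.disjoint_left]
    rintro x ⟨_, ⟨t, ht, rfl⟩, rfl⟩ ⟨_, ⟨t', ht', rfl⟩, h⟩
    have h1 := gH_iter hρ m (t : T1)
    have h2 := gH_iter hρ n (t' : T1)
    rw [h, h1, hbase t ht, hbase t' ht', zero_add, zero_add] at h2
    exact hmn (mul_irr hρ h2)

end Blow

namespace Blow

/-! ### Extension of the fibre maps to homeomorphisms -/

lemma fiber_homeo (ρ : ℝ) (φ : T1 × ℝ → ℝ) (hc : Continuous φ)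
    (hm : ∀ θ, StrictMono fun x => φ (θ, x)) (hs : ∀ θ, Surjective fun x => φ (θ, x)) :
    ∃ F : (T1 × ℝ) ≃ₜ (T1 × ℝ), ∀ p, F p = (p.1 + (ρ : T1), φ p) := by
  choose ψ hψ using hs
  have hψc : Continuous fun p : T1 × ℝ => ψ p.1 p.2 := by
    rw [continuous_iff_continuousAt]
    rintro ⟨θ, y⟩
    rw [ContinuousAt, tendsto_order]
    have hy : φ (θ, ψ θ y) = y := hψ θ y
    constructor
    · intro c hcl
      have h1 : φ (θ, c) < y := by rw [← hy]; exact hm θ hcl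
      have h2 : ∀ᶠ p : T1 × ℝ in nhds (θ, y), φ (p.1, c) < p.2 := by
        have : IsOpen {p : T1 × ℝ | φ (p.1, c) < p.2} := isOpen_lt (by fun_prop) (by fun_prop)
        exact this.mem_nhds h1
      filter_upwards [h2] with p hp
      rw [← hψ p.1 p.2] at hp
      exact (hm p.1).lt_iff_lt.1 hp
    · intro c hcl
      have h1 : y < φ (θ, c) := by rw [← hy]; exact hm θ hcl
      have h2 : ∀ᶠ p : T1 × ℝ in nhds (θ, y), p.2 < φ (p.1, c) := by
        have : IsOpen {p : T1 × ℝ | p.2 < φ (p.1, c)} := isOpen_lt (by fun_prop) (by fun_prop)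
        exact this.mem_nhds h1
      filter_upwards [h2] with p hp
      rw [← hψ p.1 p.2] at hp
      exact (hm p.1).lt_iff_lt.1 hp
  refine ⟨{ toFun := fun p => (p.1 + (ρ : T1), φ p)
            invFun := fun p => (p.1 - (ρ : T1), ψ (p.1 - (ρ : T1)) p.2)
            left_inv := ?_
            right_inv := ?_
            continuous_toFun := by fun_prop
            continuous_invFun := ?_ }, fun p => rfl⟩
  · rintro ⟨θ, x⟩
    simp only [add_sub_cancel_right]
    exact Prod.ext rfl ((hm θ).injective (hψ θ _))
  · rintro ⟨θ, x⟩
    simp only [sub_add_cancel]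
    exact Prod.ext rfl (hψ _ _)
  · have : Continuous fun p : T1 × ℝ => (p.1 - (ρ : T1), p.2) := by fun_prop
    exact Continuous.prodMk (by fun_prop) (hψc.comp this)

/-- All the data of the construction. -/
structure Sys (a b ρ : ℝ) where
  hab : a < b
  hρ : Irrational ρ
  f : T1 × ↥(Icc a b) → T1 × ↥(Icc a b)
  fc : Continuous f
  f1 : ∀ p, (f p).1 = p.1 + (ρ : T1)
  fm : ∀ θ, StrictMono fun x => (f (θ, x)).2
  γ : T1 → ↥(Icc a b)
  γc : Continuous γ
  γl : ∀ θ, a < (γ θ : ℝ)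
  γr : ∀ θ, (γ θ : ℝ) < b
  γinv : ∀ θ : T1, f (θ, γ θ) = (θ + (ρ : T1), γ (θ + (ρ : T1)))
  F : (T1 × ℝ) ≃ₜ (T1 × ℝ)
  hF : ∀ p : T1 × ↥(Icc a b), F (p.1, (p.2 : ℝ)) = ((f p).1, ((f p).2 : ℝ))
  F1 : ∀ p, (F p).1 = p.1 + (ρ : T1)
  Fm : ∀ θ, StrictMono fun x => (F (θ, x)).2

lemma exists_sys {a b ρ : ℝ} (hab : a < b) (hρ : Irrational ρ)
    (f : T1 × ↥(Icc a b) → T1 × ↥(Icc a b)) (fc : Continuous f)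
    (f1 : ∀ p, (f p).1 = p.1 + (ρ : T1)) (fm : ∀ θ, StrictMono fun x => (f (θ, x)).2)
    (γ : T1 → ↥(Icc a b)) (γc : Continuous γ) (γl : ∀ θ, a < (γ θ : ℝ))
    (γr : ∀ θ, (γ θ : ℝ) < b)
    (γinv : ∀ θ : T1, f (θ, γ θ) = (θ + (ρ : T1), γ (θ + (ρ : T1)))) :
    ∃ S : Sys a b ρ, S.f = f ∧ S.γ = γ := by
  let pr : ℝ → Icc a b := projIcc a b hab.le
  have hpr : Continuous pr := continuous_projIcc
  let φ : T1 × ℝ → ℝ := fun p => ((f (p.1, pr p.2)).2 : ℝ) + (p.2 - pr p.2)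
  have hφ : Continuous φ := by fun_prop
  have hφm : ∀ θ, StrictMono fun x => φ (θ, x) := by
    intro θ x x' hx
    have h1 : pr x ≤ pr x' := monotone_projIcc hab.le hx.le
    have e1 : (pr x : ℝ) = max a (min b x) := coe_projIcc a b hab.le x
    have e2 : (pr x' : ℝ) = max a (min b x') := coe_projIcc a b hab.le x'
    rcases h1.eq_or_lt with h | h
    · simp only [φ, h]; linarith
    · have h3 : (f (θ, pr x)).2 < (f (θ, pr x')).2 := fm θ h
      have h4 : ((f (θ, pr x)).2 : ℝ) < (f (θ, pr x')).2 := h3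
      have h5 : x - (pr x : ℝ) ≤ x' - pr x' := by
        rw [e1, e2]
        rcases max_cases a (min b x) with h | h <;> rcases max_cases a (min b x') with h' | h' <;>
        rcases min_cases b x with h'' | h'' <;> rcases min_cases b x' with h''' | h''' <;> linarith
      simp only [φ]; linarith
  have hφs : ∀ θ, Surjective fun x => φ (θ, x) := by
    intro θ y
    apply mem_range_of_exists_le_of_exists_ge (by fun_prop)
    · refine ⟨y - (b - a), ?_⟩
      have h1 := (f (θ, pr (y - (b - a)))).2.2.2
      have h2 := (pr (y - (b - a))).2.1
      simp only [φ]; linarith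
    · refine ⟨y + (b - a), ?_⟩
      have h1 := (f (θ, pr (y + (b - a)))).2.2.1
      have h2 := (pr (y + (b - a))).2.2
      simp only [φ]; linarith
  obtain ⟨F, hF⟩ := fiber_homeo ρ φ hφ hφm hφs
  refine ⟨⟨hab, hρ, f, fc, f1, fm, γ, γc, γl, γr, γinv, F, ?_, ?_, ?_⟩, rfl, rfl⟩
  · rintro ⟨θ, x⟩
    have h1 : pr (x : ℝ) = x := projIcc_val hab.le x
    rw [hF]
    refine Prod.ext (f1 (θ, x)).symm ?_
    simp only [φ, h1]; ring
  · intro p; rw [hF]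
  · intro θ
    simp only [hF]
    exact hφm θ

namespace Sys

variable {a b ρ : ℝ} (S : Sys a b ρ)

def it (k : ℤ) : (T1 × ℝ) ≃ₜ (T1 × ℝ) := S.F ^ k

lemma it_zero (p : T1 × ℝ) : S.it 0 p = p := by simp [it]

lemma it_succ (k : ℤ) (p : T1 × ℝ) : S.it (k + 1) p = S.F (S.it k p) := by
  unfold it; rw [add_comm, zpow_add, zpow_one]; rfl

lemma it_succ' (k : ℤ) (p : T1 × ℝ) : S.it (k + 1) p = S.it k (S.F p) := by
  unfold it; rw [zpow_add, zpow_one]; rfl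

lemma it_pred (k : ℤ) (p : T1 × ℝ) : S.F (S.it (k - 1) p) = S.it k p := by
  rw [← it_succ, sub_add_cancel]

lemma it1 (k : ℤ) (p : T1 × ℝ) : (S.it k p).1 = p.1 + ((k * ρ : ℝ) : T1) := by
  induction k using Int.induction_on with
  | zero => simp [it_zero]
  | succ i ih =>
    rw [it_succ, S.F1, ih]; push_cast
    rw [add_mul, AddCircle.coe_add, one_mul]; abel
  | pred i ih =>
    rw [← it_pred, S.F1, ← eq_sub_iff_add_eq] at ih
    rw [ih]; push_cast
    rw [sub_mul, AddCircle.coe_sub, one_mul]; abel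

lemma it_mono (k : ℤ) (θ : T1) : StrictMono fun x => (S.it k (θ, x)).2 := by
  induction k using Int.induction_on with
  | zero => intro x y h; simpa [it_zero] using h
  | succ i ih =>
    intro x y h
    have h2 := ih h
    have e : (S.it i (θ, x)).1 = (S.it i (θ, y)).1 := by rw [it1, it1]
    simp only [it_succ]
    have := S.Fm (S.it i (θ, x)).1 h2
    simp only [Prod.mk.eta] at this
    rwa [e] at this
  | pred i ih =>
    intro x y h
    have h2 := ih h
    have e : (S.it (-(i:ℤ) - 1) (θ, x)).1 = (S.it (-(i:ℤ) - 1) (θ, y)).1 := by rw [it1, it1]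
    simp only [← it_pred S (-(i:ℤ))] at h2
    apply (S.Fm (S.it (-(i:ℤ) - 1) (θ, x)).1).lt_iff_lt.1
    simp only [Prod.mk.eta]
    rwa [e]

lemma F_γ (θ : T1) : S.F (θ, (S.γ θ : ℝ)) = (θ + (ρ : T1), (S.γ (θ + (ρ : T1)) : ℝ)) := by
  have := S.hF (θ, S.γ θ)
  rw [S.γinv] at this
  exact this

lemma it_γ (k : ℤ) (θ : T1) : S.it k (θ, (S.γ θ : ℝ)) =
    (θ + ((k * ρ : ℝ) : T1), (S.γ (θ + ((k * ρ : ℝ) : T1)) : ℝ)) := by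
  induction k using Int.induction_on with
  | zero => simp [it_zero]
  | succ i ih =>
    have : θ + (((i + 1 : ℤ) * ρ : ℝ) : T1) = θ + (((i : ℤ) * ρ : ℝ) : T1) + (ρ : T1) := by
      push_cast
      rw [add_mul, AddCircle.coe_add, one_mul]; abel
    rw [it_succ, ih, S.F_γ, this]
  | pred i ih =>
    have : θ + (((-(i : ℤ) - 1 : ℤ) * ρ : ℝ) : T1) + (ρ : T1) = θ + (((-(i : ℤ) : ℤ) * ρ : ℝ) : T1) := by
      push_cast
      rw [sub_mul, AddCircle.coe_sub, one_mul]; abel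
    apply S.F.injective
    rw [it_pred, ih, S.F_γ, this]

def D (n : ℤ) (p : T1 × ℝ) : ℝ :=
  qf (S.it (-n) p).1 + |(S.it (-n) p).2 - (S.γ (S.it (-n) p).1 : ℝ)|

def N (n : ℤ) (p : T1 × ℝ) : ℝ :=
  mf (S.it (-n) p).1 + max ((S.it (-n) p).2 - (S.γ (S.it (-n) p).1 : ℝ)) 0

lemma D_cont (n : ℤ) : Continuous (S.D n) := by
  have := qf_cont
  have := S.γc
  unfold D; fun_prop

lemma N_cont (n : ℤ) : Continuous (S.N n) := by
  have := mf_cont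
  have := S.γc
  unfold N; fun_prop

lemma N_nonneg (n : ℤ) (p : T1 × ℝ) : 0 ≤ S.N n p :=
  add_nonneg (mf_nonneg _) (le_max_right _ _)

lemma N_le (n : ℤ) (p : T1 × ℝ) : S.N n p ≤ S.D n p :=
  add_le_add (mf_le _) (max_le (le_abs_self _) (abs_nonneg _))

lemma sub_eq' (n : ℤ) (θ : T1) : θ + (((-n : ℤ) * ρ : ℝ) : T1) = θ - ((n * ρ : ℝ) : T1) := by
  push_cast
  rw [neg_mul, AddCircle.coe_neg, sub_eq_add_neg]

lemma D_γ (n : ℤ) (θ : T1) : S.D n (θ, (S.γ θ : ℝ)) = qf (θ - ((n * ρ : ℝ) : T1)) := by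
  simp only [D, it_γ, sub_self, abs_zero, add_zero, sub_eq']

lemma N_γ (n : ℤ) (θ : T1) : S.N n (θ, (S.γ θ : ℝ)) = mf (θ - ((n * ρ : ℝ) : T1)) := by
  simp only [N, it_γ, sub_self, max_self, add_zero, sub_eq']

lemma D_zero {n : ℤ} {θ : T1} {x : ℝ} (h : S.D n (θ, x) = 0) :
    θ = ((n * ρ : ℝ) : T1) ∧ x = S.γ θ := by
  unfold D at h
  have h1 := qf_nonneg (S.it (-n) (θ, x)).1
  have h2 := abs_nonneg ((S.it (-n) (θ, x)).2 - (S.γ (S.it (-n) (θ, x)).1 : ℝ))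
  have h3 : qf (S.it (-n) (θ, x)).1 = 0 := by linarith
  have h4 : (S.it (-n) (θ, x)).2 - (S.γ (S.it (-n) (θ, x)).1 : ℝ) = 0 :=
    abs_eq_zero.1 (by linarith)
  have h5 := qf_eq_zero h3
  rw [it1, sub_eq'] at h5
  refine ⟨sub_eq_zero.1 h5, ?_⟩
  have h6 : S.it (-n) (θ, x) = S.it (-n) (θ, (S.γ θ : ℝ)) := by
    rw [it_γ]
    refine Prod.ext (S.it1 _ _) ?_
    rw [it1] at h4
    simp only
    linarith
  exact (Prod.mk.inj ((S.it (-n)).injective h6)).2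

lemma DN_step (n : ℤ) (p : T1 × ℝ) : S.D n (S.F p) = S.D (n - 1) p ∧ S.N n (S.F p) = S.N (n - 1) p := by
  have : S.it (-n) (S.F p) = S.it (-(n - 1)) p := by
    rw [← it_succ']; congr 2; ring
  simp only [D, N, this, and_self]

/-- The blown-up space. -/
abbrev E := {e : (T1 × ↥(Icc a b)) × TT // ∀ n, (e.2 n : ℝ) * S.D n (e.1.1, (e.1.2 : ℝ)) =
  S.N n (e.1.1, (e.1.2 : ℝ))}

instance : CompactSpace S.E := by
  apply isCompact_iff_compactSpace.1
  apply IsClosed.isCompact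
  change IsClosed {e : (T1 × ↥(Icc a b)) × TT | ∀ n, (e.2 n : ℝ) * S.D n (e.1.1, (e.1.2 : ℝ)) =
    S.N n (e.1.1, (e.1.2 : ℝ))}
  rw [Set.ofPred_forall]
  refine isClosed_iInter fun n => ?_
  have := S.D_cont n
  have := S.N_cont n
  exact isClosed_eq (by fun_prop) (by fun_prop)

lemma E_lt {e e' : S.E} (hθ : e.1.1.1 = e'.1.1.1) (hx : e.1.1.2 < e'.1.1.2) : e.1.2 ≤ e'.1.2 := by
  intro n
  have h1 := e.2 n
  have h2 := e'.2 n
  rw [← hθ] at h2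
  have h3 := S.it_mono (-n) e.1.1.1 (show (e.1.1.2 : ℝ) < e'.1.1.2 from hx)
  simp only at h3
  unfold D N at h1 h2
  have e1 : (S.it (-n) (e.1.1.1, (e'.1.1.2 : ℝ))).1 = (S.it (-n) (e.1.1.1, (e.1.1.2 : ℝ))).1 := by
    rw [it1, it1]
  rw [e1] at h2
  exact base_mono (mf_nonneg _) (mf_le _) (by linarith) (e'.1.2 n).2.1 (e.1.2 n).2.2 h1 h2

lemma E_eq {e e' : S.E} (h : e.1.1 = e'.1.1) {n : ℤ}
    (hn : S.D n (e.1.1.1, (e.1.1.2 : ℝ)) ≠ 0) : e.1.2 n = e'.1.2 n := by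
  have h1 := e.2 n
  have h2 := e'.2 n
  rw [← h] at h2
  exact Subtype.ext (mul_right_cancel₀ hn (h1.trans h2.symm))

def elt (e e' : S.E) : Prop := e.1.1.1 = e'.1.1.1 ∧ e.1.1.2 ≤ e'.1.1.2 ∧ e.1.2 ≤ e'.1.2 ∧
  (e.1.1.2 < e'.1.1.2 ∨ (e.1.1.2 = e'.1.1.2 ∧ e.1.2 < e'.1.2 ∧ e.1.1.2 = S.γ e.1.1.1))

lemma E_total (e e' : S.E) (hθ : e.1.1.1 = e'.1.1.1) : e = e' ∨ S.elt e e' ∨ S.elt e' e := by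
  rcases lt_trichotomy e.1.1.2 e'.1.1.2 with h | h | h
  · exact Or.inr (Or.inl ⟨hθ, h.le, S.E_lt hθ h, Or.inl h⟩)
  · have hb : e.1.1 = e'.1.1 := Prod.ext hθ h
    by_cases hg : e.1.1.2 = S.γ e.1.1.1
    · have := seq_total S.hρ (θ := e.1.1.1) (τ := e.1.2) (τ' := e'.1.2)
        (fun n hn => S.E_eq hb (fun hh => hn (S.D_zero hh).1))
      rcases this with h3 | h3 | h3
      · exact Or.inl (Subtype.ext (Prod.ext hb h3))
      · exact Or.inr (Or.inl ⟨hθ, h.le, h3.le, Or.inr ⟨h, h3, hg⟩⟩)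
      · exact Or.inr (Or.inr ⟨hθ.symm, h.ge, h3.le, Or.inr ⟨h.symm, h3, by rw [← hb]; exact hg⟩⟩)
    · left
      refine Subtype.ext (Prod.ext hb (funext fun n => S.E_eq hb (fun hh => hg ?_)))
      exact Subtype.ext (S.D_zero hh).2
  · exact Or.inr (Or.inr ⟨hθ.symm, h.le, S.E_lt hθ.symm h, Or.inl h⟩)

end Sys

def PP (a x s : ℝ) : ℝ := (x - a) * (1 + s)
def QQ (b x s : ℝ) : ℝ := (b - x) * (2 - s)
def zz (a b x s : ℝ) : ℝ := a + (b - a) * (PP a x s / (PP a x s + QQ b x s))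

section
variable {a b x s x' s' : ℝ}

lemma PQ_pos (hab : a < b) (hx : x ∈ Icc a b) (h0 : 0 ≤ s) (h1 : s ≤ 1 / 2) :
    0 ≤ PP a x s ∧ 0 ≤ QQ b x s ∧ 0 < PP a x s + QQ b x s := by
  have hP : 0 ≤ PP a x s := mul_nonneg (by linarith [hx.1]) (by linarith)
  have hQ : 0 ≤ QQ b x s := mul_nonneg (by linarith [hx.2]) (by linarith)
  refine ⟨hP, hQ, ?_⟩
  unfold PP QQ at *
  nlinarith [mul_nonneg (sub_nonneg.2 hx.1) h0, mul_nonneg (sub_nonneg.2 hx.2) (by linarith : 0 ≤ 1 / 2 - s),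
    hx.1, hx.2]

lemma zz_mem (hab : a < b) (hx : x ∈ Icc a b) (h0 : 0 ≤ s) (h1 : s ≤ 1 / 2) :
    zz a b x s ∈ Icc a b := by
  obtain ⟨hP, hQ, hs⟩ := PQ_pos hab hx h0 h1
  have h2 : 0 ≤ PP a x s / (PP a x s + QQ b x s) := by positivity
  have h3 : PP a x s / (PP a x s + QQ b x s) ≤ 1 := (div_le_one hs).2 (by linarith)
  unfold zz
  constructor <;> nlinarith

lemma zz_lt (hab : a < b) (hx : x ∈ Icc a b) (h0 : 0 ≤ s) (hx' : x' ∈ Icc a b)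
    (h1' : s' ≤ 1 / 2) (hxx : x ≤ x') (hss : s ≤ s')
    (h : x < x' ∨ (x = x' ∧ s < s' ∧ a < x ∧ x < b)) : zz a b x s < zz a b x' s' := by
  obtain ⟨hP, hQ, hs⟩ := PQ_pos hab hx h0 (by linarith)
  obtain ⟨hP', hQ', hs'⟩ := PQ_pos hab hx' (by linarith) h1'
  have key : PP a x s < PP a x' s' ∧ QQ b x' s' < QQ b x s := by
    have := hx.1
    have := hx.2
    have := hx'.1
    have := hx'.2
    unfold PP QQ
    rcases h with h | ⟨h, h2, h3, h4⟩
    · constructor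
      · calc (x - a) * (1 + s) ≤ (x - a) * (1 + s') := by gcongr
          _ < (x' - a) * (1 + s') := by
            apply mul_lt_mul_of_pos_right <;> linarith
      · calc (b - x') * (2 - s') ≤ (b - x') * (2 - s) := by gcongr
          _ < (b - x) * (2 - s) := by
            apply mul_lt_mul_of_pos_right <;> linarith
    · subst h
      constructor
      · apply mul_lt_mul_of_pos_left <;> linarith
      · apply mul_lt_mul_of_pos_left <;> linarith
  have : PP a x s / (PP a x s + QQ b x s) < PP a x' s' / (PP a x' s' + QQ b x' s') := by
    rw [div_lt_div_iff₀ hs hs']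
    nlinarith [mul_le_mul_of_nonneg_left key.2.le hP, mul_lt_mul_of_pos_right key.1 (by linarith : 0 < QQ b x s)]
  unfold zz
  nlinarith

lemma zz_left (a b s : ℝ) : zz a b a s = a := by simp [zz, PP]

lemma zz_right (hab : a < b) (h0 : 0 ≤ s) (h1 : s ≤ 1 / 2) : zz a b b s = b := by
  obtain ⟨hP, hQ, hs⟩ := PQ_pos hab (x := b) ⟨hab.le, le_rfl⟩ h0 h1
  have : QQ b b s = 0 := by simp [QQ]
  rw [zz, this, add_zero, div_self, mul_one]
  · ring
  · linarith

end

end Blow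

namespace Blow

namespace Sys

variable {a b ρ : ℝ} (S : Sys a b ρ)

def piE (e : S.E) : T1 × ↥(Icc a b) :=
  (e.1.1.1, ⟨zz a b e.1.1.2 (SS e.1.2), zz_mem S.hab e.1.1.2.2 (SS_nonneg _) (SS_le _)⟩)

lemma piE_cont : Continuous S.piE := by
  have h := SS_cont
  have h2 : Continuous fun e : S.E => zz a b e.1.1.2 (SS e.1.2) := by
    unfold zz
    refine continuous_const.add (continuous_const.mul (Continuous.div ?_ ?_ ?_))
    · unfold PP; fun_prop
    · unfold PP QQ; fun_prop
    · intro e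
      exact (PQ_pos S.hab e.1.1.2.2 (SS_nonneg _) (SS_le _)).2.2.ne'
  unfold piE
  exact Continuous.prodMk (by fun_prop) (h2.subtype_mk _)

lemma piE_lt {e e' : S.E} (h : S.elt e e') : (S.piE e).2 < (S.piE e').2 := by
  obtain ⟨_, h2, h3, h4⟩ := h
  apply Subtype.mk_lt_mk.2
  apply zz_lt S.hab e.1.1.2.2 (SS_nonneg _) e'.1.1.2.2 (SS_le _) h2 (SS_mono h3)
  rcases h4 with h4 | ⟨h4, h5, h6⟩
  · exact Or.inl h4
  · refine Or.inr ⟨congrArg _ h4, SS_strict h5, ?_, ?_⟩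
    · rw [h6]; exact S.γl _
    · rw [h6]; exact S.γr _

lemma piE_inj : Injective S.piE := by
  intro e e' h
  have h1 : e.1.1.1 = e'.1.1.1 := (Prod.mk.inj h).1
  rcases S.E_total e e' h1 with h2 | h2 | h2
  · exact h2
  · have := S.piE_lt h2
    rw [h] at this
    exact absurd this (lt_irrefl _)
  · have := S.piE_lt h2
    rw [h] at this
    exact absurd this (lt_irrefl _)

lemma piE_surj : Surjective S.piE := by
  rintro ⟨θ, z⟩
  have hab := S.hab
  have : ConnectedSpace (Icc a b) := isConnected_iff_connectedSpace.1 (isConnected_Icc hab.le)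
  have hc := conn (A := Icc a b) (fun n x => S.N n (θ, (x : ℝ))) (fun n x => S.D n (θ, (x : ℝ)))
    (fun n => (S.N_cont n).comp (by fun_prop)) (fun n => (S.D_cont n).comp (by fun_prop))
    (fun n x => S.N_nonneg n _) (fun n x => S.N_le n _)
  set Q := {e : Icc a b × TT // ∀ n : ℤ, (e.2 n : ℝ) * S.D n (θ, (e.1 : ℝ)) =
    S.N n (θ, (e.1 : ℝ))}
  let j : Q → S.E := fun e => ⟨((θ, e.1.1), e.1.2), e.2⟩
  have hj : Continuous j := by fun_prop
  let φ : Q → ℝ := fun e => ((S.piE (j e)).2 : ℝ)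
  have hφ : Continuous φ :=
    continuous_subtype_val.comp (continuous_snd.comp (S.piE_cont.comp hj))
  choose τ hτ using fun n : ℤ => exists_sol (S.N_nonneg n (θ, a)) (S.N_le n (θ, a))
  choose τ' hτ' using fun n : ℤ => exists_sol (S.N_nonneg n (θ, b)) (S.N_le n (θ, b))
  let e0 : Q := ⟨(⟨a, le_rfl, hab.le⟩, τ), fun n => hτ n⟩
  let e1 : Q := ⟨(⟨b, hab.le, le_rfl⟩, τ'), fun n => hτ' n⟩
  have h0 : φ e0 = a := zz_left a b _
  have h1 : φ e1 = b := zz_right hab (SS_nonneg _) (SS_le _)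
  obtain ⟨e, he⟩ := mem_range_of_exists_le_of_exists_ge hφ
    (c := (z : ℝ)) ⟨e0, h0.trans_le z.2.1⟩ ⟨e1, z.2.2.trans h1.ge⟩
  exact ⟨j e, Prod.ext rfl (Subtype.ext he)⟩

def piH : S.E ≃ₜ T1 × ↥(Icc a b) :=
  Continuous.homeoOfEquivCompactToT2 (f := Equiv.ofBijective S.piE ⟨S.piE_inj, S.piE_surj⟩)
    S.piE_cont

lemma piH_apply (e : S.E) : S.piH e = S.piE e := rfl

lemma sig1 (p : T1 × ↥(Icc a b)) : (S.piH.symm p).1.1.1 = p.1 := by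
  have h1 : S.piE (S.piH.symm p) = p := S.piH.apply_symm_apply p
  have h2 : (S.piE (S.piH.symm p)).1 = p.1 := by rw [h1]
  exact h2

lemma sig_lt {θ : T1} {z z' : ↥(Icc a b)} (h : z < z') :
    S.elt (S.piH.symm (θ, z)) (S.piH.symm (θ, z')) := by
  have h1 : S.piE (S.piH.symm (θ, z)) = (θ, z) := S.piH.apply_symm_apply _
  have h2 : S.piE (S.piH.symm (θ, z')) = (θ, z') := S.piH.apply_symm_apply _
  rcases S.E_total (S.piH.symm (θ, z)) (S.piH.symm (θ, z')) (by rw [sig1, sig1]) with h3 | h3 | h3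
  · rw [h3, h2] at h1
    exact absurd (Prod.mk.inj h1).2 h.ne'
  · exact h3
  · have := S.piE_lt h3
    rw [h1, h2] at this
    exact absurd this h.not_gt

def FE (e : S.E) : S.E := ⟨(S.f e.1.1, shift 1 e.1.2), by
  intro n
  have h := e.2 (n - 1)
  have h2 := S.hF e.1.1
  obtain ⟨h3, h4⟩ := S.DN_step n (e.1.1.1, (e.1.1.2 : ℝ))
  rw [← h3, ← h4, h2] at h
  exact h⟩

lemma FE_cont : Continuous S.FE := by
  have := shift_cont 1
  have := S.fc
  unfold FE; fun_prop

lemma FE_lt {e e' : S.E} (h : S.elt e e') : S.elt (S.FE e) (S.FE e') := by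
  obtain ⟨h1, h2, h3, h4⟩ := h
  have hb : (S.f e.1.1).1 = (S.f e'.1.1).1 := by rw [S.f1, S.f1, h1]
  refine ⟨hb, ?_, shift_mono 1 h3, ?_⟩
  · have := (S.fm e.1.1.1).monotone h2
    simp only [Prod.mk.eta] at this
    rwa [h1] at this
  · rcases h4 with h4 | ⟨h4, h5, h6⟩
    · left
      have := (S.fm e.1.1.1) h4
      simp only [Prod.mk.eta] at this
      rwa [h1] at this
    · right
      have hp : e.1.1 = e'.1.1 := Prod.ext h1 h4
      refine ⟨by simp only [FE, hp], ?_, ?_⟩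
      · refine lt_of_le_of_ne (shift_mono 1 h3) ?_
        intro hh
        have := congrArg (shift (-1)) hh
        simp only [FE] at this
        rw [shift_neg, shift_neg] at this
        exact h5.ne this
      · have hp : e.1.1 = (e.1.1.1, S.γ e.1.1.1) := Prod.ext rfl h6
        have : S.f e.1.1 = (e.1.1.1 + (ρ : T1), S.γ (e.1.1.1 + (ρ : T1))) := by
          rw [← S.γinv, ← hp]
        simp only [FE, this]

def fhat (p : T1 × ↥(Icc a b)) : T1 × ↥(Icc a b) := S.piH (S.FE (S.piH.symm p))
def h (p : T1 × ↥(Icc a b)) : T1 × ↥(Icc a b) := (S.piH.symm p).1.1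

lemma h_surj : Surjective S.h := by
  intro p
  choose τ hτ using fun n : ℤ => exists_sol (S.N_nonneg n (p.1, (p.2 : ℝ))) (S.N_le n _)
  refine ⟨S.piH ⟨(p, τ), hτ⟩, ?_⟩
  simp [h]

lemma h_mono (θ : T1) : Monotone fun x => (S.h (θ, x)).2 := by
  intro z z' hz
  rcases hz.eq_or_lt with rfl | hz
  · exact le_rfl
  · exact (S.sig_lt hz).2.1

lemma h_fst (p : T1 × ↥(Icc a b)) : (S.h p).1 = p.1 := S.sig1 p

/-- Two points with the same image off the exceptional fibres coincide. -/
lemma h_inj {p p' : T1 × ↥(Icc a b)} (hh : S.h p = S.h p')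
    (hD : ∀ n, S.D n ((S.h p).1, ((S.h p).2 : ℝ)) ≠ 0) : p = p' := by
  apply S.piH.symm.injective
  exact Subtype.ext (Prod.ext hh (funext fun n => S.E_eq hh (hD n)))

lemma no_curve (η : T1 → ↥(Icc a b)) (hη : Continuous η)
    (hsub : curveGraph η ⊆ S.h ⁻¹' curveGraph S.γ) : False := by
  let v : ℝ → ℝ := fun s => ((S.piH.symm ((s : T1), η (s : T1))).1.2 0 : ℝ)
  have hv : Continuous v := by
    have h1 := S.piH.symm.continuous
    have h2 : Continuous fun s : ℝ => (s : T1) := AddCircle.continuous_mk' 1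
    have h3 : Continuous fun s : ℝ => S.piH.symm ((s : T1), η (s : T1)) :=
      h1.comp (h2.prodMk (hη.comp h2))
    fun_prop
  have heq : EqOn v id (Ioo 0 1) := by
    intro s hs
    have hf : Int.fract s = s := Int.fract_eq_self.2 ⟨hs.1.le, hs.2⟩
    have hmem : S.h ((s : T1), η (s : T1)) ∈ curveGraph S.γ :=
      hsub (show ((s : T1), η (s : T1)) ∈ curveGraph η from rfl)
    have hmem' : (S.piH.symm ((s : T1), η (s : T1))).1.1.2 =
      S.γ (S.piH.symm ((s : T1), η (s : T1))).1.1.1 := hmem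
    have h1 := (S.piH.symm ((s : T1), η (s : T1))).2 0
    rw [hmem', S.D_γ, S.N_γ, sig1] at h1
    simp only [Int.cast_zero, zero_mul, AddCircle.coe_zero, sub_zero] at h1
    have := saw_eq h1 (by rw [hf]; exact hs.1.ne')
    rw [hf] at this
    exact this
  have hcl := heq.closure hv continuous_id
  rw [closure_Ioo (by norm_num)] at hcl
  have h0 : v 0 = 0 := hcl ⟨le_rfl, zero_le_one⟩
  have h1 : v 1 = 1 := hcl ⟨zero_le_one, le_rfl⟩
  have h2 : v 1 = v 0 := by
    simp only [v]
    rw [AddCircle.coe_period, AddCircle.coe_zero]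
  linarith

/-- The points of an exceptional fibre. -/
lemma seg (n : ℤ) (p : T1 × ↥(Icc a b)) (hp : p = (((n * ρ : ℝ) : T1), S.γ ((n * ρ : ℝ) : T1))) :
    ∃ x₁ x₂ : ↥(Icc a b), x₁ < x₂ ∧ S.h ⁻¹' {p} = {p.1} ×ˢ Set.Icc x₁ x₂ := by
  choose τ hτ using fun n : ℤ => exists_sol (S.N_nonneg n (p.1, (p.2 : ℝ))) (S.N_le n _)
  have hp2 : p.2 = S.γ p.1 := by rw [hp]
  have hK : ∀ r : unitInterval, ∀ k : ℤ, ((Function.update τ n r k : unitInterval) : ℝ) *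
      S.D k (p.1, (p.2 : ℝ)) = S.N k (p.1, (p.2 : ℝ)) := by
    intro r k
    by_cases hk : k = n
    · subst hk
      have h1 : qf ((0:ℝ) : T1) = 0 := by rw [qf_coe]; simp
      have h2 : mf ((0:ℝ) : T1) = 0 := by rw [mf_coe]; simp
      have h3 : p.1 - ((k * ρ : ℝ) : T1) = ((0:ℝ) : T1) := by rw [hp]; simp
      rw [hp2, S.D_γ, S.N_γ, h3, h1, h2, mul_zero]
    · rw [Function.update_of_ne hk]; exact hτ k
  let er : unitInterval → S.E := fun r => ⟨(p, Function.update τ n r), hK r⟩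
  have her1 : ∀ r, (S.piE (er r)).1 = p.1 := fun r => rfl
  have hsig : ∀ r, S.piH.symm (p.1, (S.piE (er r)).2) = er r := by
    intro r
    exact S.piH.symm_apply_apply (er r)
  have hag : ∀ e : S.E, e.1.1 = p → ∀ k, k ≠ n → e.1.2 k = τ k := by
    intro e he k hk
    have := S.E_eq (e := er 0) (e' := e) he.symm (n := k) (fun hh => by
      have := (S.D_zero hh).1
      simp only [er] at this
      rw [hp] at this
      exact hk (mul_irr S.hρ this).symm)
    rw [← this]
    simp [er, hk]
  refine ⟨(S.piE (er 0)).2, (S.piE (er 1)).2, ?_, ?_⟩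
  · apply S.piE_lt
    have hlt : Function.update τ n 0 < Function.update τ n 1 := by
      refine Pi.lt_def.2 ⟨fun k => ?_, n, by simp⟩
      by_cases hk : k = n
      · subst hk; simp
      · simp [hk]
    exact ⟨rfl, le_rfl, hlt.le, Or.inr ⟨rfl, hlt, hp2⟩⟩
  · ext ⟨θ, z⟩
    simp only [mem_preimage, mem_singleton_iff, mem_prod]
    constructor
    · intro hz
      have hθ : θ = p.1 := by rw [← hz, S.h_fst]
      subst hθ
      have hag' := hag (S.piH.symm (p.1, z)) hz
      refine ⟨rfl, ?_, ?_⟩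
      · by_contra hlt
        push Not at hlt
        have := S.sig_lt (θ := p.1) hlt
        rw [hsig] at this
        obtain ⟨_, _, _, h4 | ⟨_, h5, _⟩⟩ := this
        · have h6 : (S.piH.symm (p.1, z)).1.1 = p := hz
          rw [h6] at h4
          exact absurd h4 (lt_irrefl _)
        · refine h5.not_ge fun k => ?_
          by_cases hk : k = n
          · subst hk; simp [er]
          · rw [hag' k hk]; simp [er, hk]
      · by_contra hlt
        push Not at hlt
        have := S.sig_lt (θ := p.1) hlt
        rw [hsig] at this
        obtain ⟨_, _, _, h4 | ⟨_, h5, _⟩⟩ := this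
        · have h6 : (S.piH.symm (p.1, z)).1.1 = p := hz
          rw [h6] at h4
          exact absurd h4 (lt_irrefl _)
        · refine h5.not_ge fun k => ?_
          by_cases hk : k = n
          · subst hk; simp only [er, Function.update_self]; exact (((S.piH.symm (p.1, z)).1.2 k)).2.2
          · rw [hag' k hk]; simp [er, hk]
    · rintro ⟨hθ, h1, h2⟩
      subst hθ
      have m1 := S.h_mono p.1 h1
      have m2 := S.h_mono p.1 h2
      have hh : ∀ r, S.h (p.1, (S.piE (er r)).2) = p := by
        intro r
        unfold h
        rw [hsig]
      simp only [hh] at m1 m2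
      exact Prod.ext (S.h_fst _) (le_antisymm m2 m1)

lemma sing (p : T1 × ↥(Icc a b)) (hp : ∀ n, S.D n (p.1, (p.2 : ℝ)) ≠ 0) :
    ∃ x : ↥(Icc a b), S.h ⁻¹' {p} = {(p.1, x)} := by
  obtain ⟨q, hq⟩ := S.h_surj p
  have hq1 : q.1 = p.1 := by rw [← hq, S.h_fst]
  refine ⟨q.2, ?_⟩
  have hq2 : (p.1, q.2) = q := by rw [← hq1]
  ext r
  rw [mem_preimage, mem_singleton_iff, mem_singleton_iff, hq2]
  constructor
  · intro hr
    exact S.h_inj (hr.trans hq.symm) (by rw [hr]; exact hp)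
  · rintro rfl; exact hq

lemma blow : BlowUpConclusion (fun θ : T1 => θ + (ρ : T1)) S.f S.γ S.fhat S.h := by
  have hσ := S.piH.symm.continuous
  refine ⟨⟨?_, S.h_surj, ?_⟩, S.h_fst, ⟨?_, ?_, ?_⟩, S.h_mono, ?_, ?_, ?_⟩
  · unfold h; fun_prop
  · funext p
    simp [h, fhat, FE]
  · exact S.piH.continuous.comp (S.FE_cont.comp hσ)
  · intro p
    change (S.f _).1 = _
    rw [S.f1, S.sig1]
  · intro θ z z' hz
    exact S.piE_lt (S.FE_lt (S.sig_lt hz))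
  · intro p hp p' _ hpp
    refine S.h_inj hpp fun n hn => hp ?_
    exact Subtype.ext (S.D_zero hn).2
  · refine ⟨range fun n : ℤ => (((n * ρ : ℝ) : T1), S.γ ((n * ρ : ℝ) : T1)), ?_,
      countable_range _, ?_, ?_⟩
    · rintro _ ⟨n, rfl⟩; rfl
    · rintro p ⟨n, hn⟩
      exact S.seg n p hn.symm
    · rintro p ⟨hp, hp'⟩
      refine S.sing p fun n hn => hp' ⟨n, ?_⟩
      have h1 := (S.D_zero hn).1
      have h2 : p.2 = S.γ p.1 := hp
      exact Prod.ext h1.symm (by rw [h2, h1])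
  · exact fun η hη hsub => S.no_curve η hη hsub

def iota (e : KK ρ) : S.E := ⟨((e.1.1, S.γ e.1.1), e.1.2), fun n => by
  simp only
  rw [S.D_γ, S.N_γ]; exact e.2 n⟩

lemma iota_cont : Continuous S.iota := by
  have := S.γc
  unfold iota; fun_prop

lemma iota_shift (e : KK ρ) : S.FE (S.iota e) = S.iota (shiftK 1 e) := by
  apply Subtype.ext
  simp only [FE, iota, shiftK, S.γinv, Int.cast_one, one_mul]

def xi (t : T1) : T1 × ↥(Icc a b) := S.piH (S.iota ((chiH S.hρ).symm t))

lemma xi_inj : Injective S.xi := by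
  intro t t' h
  have h2 := S.piH.injective h
  have h3 := congrArg Subtype.val h2
  apply (chiH S.hρ).symm.injective
  apply Subtype.ext
  exact Prod.ext (congrArg (fun e => e.1.1) h3) (congrArg (fun e => e.2) h3)

lemma xi_range : range S.xi = S.h ⁻¹' curveGraph S.γ := by
  ext p
  constructor
  · rintro ⟨t, rfl⟩
    simp only [mem_preimage, h, xi, Homeomorph.symm_apply_apply]
    rfl
  · intro hp
    have hp' : (S.piH.symm p).1.1.2 = S.γ (S.piH.symm p).1.1.1 := hp
    let e : KK ρ := ⟨((S.piH.symm p).1.1.1, (S.piH.symm p).1.2), fun n => by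
      have := (S.piH.symm p).2 n
      rw [hp', S.D_γ, S.N_γ] at this
      exact this⟩
    refine ⟨chiH S.hρ e, ?_⟩
    have : S.iota e = S.piH.symm p := by
      apply Subtype.ext
      exact Prod.ext (Prod.ext rfl hp'.symm) rfl
    rw [xi, Homeomorph.symm_apply_apply, this, Homeomorph.apply_symm_apply]

lemma final : ∃ fhat h : T1 × ↥(Icc a b) → T1 × ↥(Icc a b),
      BlowUpConclusion (fun θ : T1 => θ + (ρ : T1)) S.f S.γ fhat h ∧
      ∃ ξ : T1 → T1 × ↥(Icc a b), Continuous ξ ∧ Injective ξ ∧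
        Set.range ξ = h ⁻¹' curveGraph S.γ ∧
        ∃ g : T1 ≃ₜ T1, DenjoyType g ∧ ∀ t : T1, fhat (ξ t) = ξ (g t) := by
  refine ⟨S.fhat, S.h, S.blow, S.xi, ?_, S.xi_inj, S.xi_range, gH S.hρ, gH_denjoy S.hρ, ?_⟩
  · exact S.piH.continuous.comp (S.iota_cont.comp (chiH S.hρ).symm.continuous)
  · intro t
    rw [fhat, xi, xi, Homeomorph.symm_apply_apply, iota_shift, gH_symm]

end Sys

end Blow

/-- in the blow-up construction, `h⁻¹(Γ)` is homeomorphic to the circle,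
via a homeomorphism conjugating `f̂|_{h⁻¹(Γ)}` to a Denjoy-type circle homeomorphism. -/
theorem stmt12 {I : Set ℝ} (hIcomp : IsCompact I) (hIconn : I.OrdConnected)
    (ρ : ℝ) (hρ : Irrational ρ)
    (f : T1 × ↥I → T1 × ↥I) (hf : ForcedIncreasing (fun θ : T1 => θ + (ρ : T1)) f)
    (γ : T1 → ↥I) (hγc : Continuous γ) (hγint : ∀ θ : T1, (γ θ : ℝ) ∈ interior I)
    (hγinv : ∀ θ : T1, f (θ, γ θ) = (θ + (ρ : T1), γ (θ + (ρ : T1)))) :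
    ∃ fhat h : T1 × ↥I → T1 × ↥I,
      BlowUpConclusion (fun θ : T1 => θ + (ρ : T1)) f γ fhat h ∧
      ∃ ξ : T1 → T1 × ↥I, Continuous ξ ∧ Injective ξ ∧
        Set.range ξ = h ⁻¹' curveGraph γ ∧
        ∃ g : T1 ≃ₜ T1, DenjoyType g ∧ ∀ t : T1, fhat (ξ t) = ξ (g t) := by
  have hne : I.Nonempty := ⟨_, (γ 0).2⟩
  obtain ⟨a, b, rfl⟩ : ∃ a b : ℝ, I = Icc a b := by
    refine ⟨sInf I, sSup I, ?_⟩
    apply Subset.antisymm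
    · intro x hx
      exact ⟨csInf_le hIcomp.bddBelow hx, le_csSup hIcomp.bddAbove hx⟩
    · exact hIconn.out (hIcomp.sInf_mem hne) (hIcomp.sSup_mem hne)
  rw [interior_Icc] at hγint
  obtain ⟨fc, f1, fm⟩ := hf
  obtain ⟨S, rfl, rfl⟩ := Blow.exists_sys ((hγint 0).1.trans (hγint 0).2) hρ f fc f1 fm γ hγc
    (fun θ => (hγint θ).1) (fun θ => (hγint θ).2) hγinv
  exact S.final

end
end

section
/- Let Θ be a compact metric space, α a homeomorphism of Θ possessing an aperiodic point θ* which is not isolated, and let f be an α-forced increasing interval map on Θ × I admitting an f-invariant curve Γ = {(θ,γ(θ))} with γ : Θ → int I continuous. Then there exists a topological extension f̂ of f with factor map h(θ,x) = (θ, h_θ(x)) such that: f̂ is an α-forced increasing interval map; all h_θ are non-decreasing; h is injective off h^{-1}(Γ); countably many points of Γ have vertical-segment h-preimages and all others singleton preimages; h^{-1}(Γ) contains no graph of a continuous curve η : Θ → I; and h^{-1}(Γ) is a closed, f̂-invariant, pinched set projecting onto all of Θ. -/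
open Set Function MeasureTheory

noncomputable section

lemma bu_extend {Θ : Type} [MetricSpace Θ] (α : Θ ≃ₜ Θ) {a b : ℝ} (hab : a ≤ b)
    (f : Θ × ↥(Icc a b) → Θ × ↥(Icc a b)) (hf : ForcedIncreasing (⇑α) f) :
    ∃ G : (Θ × ℝ) ≃ₜ (Θ × ℝ),
      (∀ p : Θ × ↥(Icc a b), G (p.1, (p.2 : ℝ)) = (α p.1, ((f p).2 : ℝ))) ∧
      (∀ p, (G p).1 = α p.1) ∧ ∀ θ, StrictMono fun x => (G (θ, x)).2 := by
  obtain ⟨hc, hfst, hmono⟩ := hf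
  set g : Θ × ℝ → ℝ := fun p => ((f (p.1, projIcc a b hab p.2)).2 : ℝ) +
    (p.2 - (projIcc a b hab p.2 : ℝ)) with hg
  have hproj : Continuous (projIcc a b hab) := continuous_projIcc
  have gc : Continuous g := by
    have h1 : Continuous fun p : Θ × ℝ => f (p.1, projIcc a b hab p.2) :=
      hc.comp (continuous_fst.prodMk (hproj.comp continuous_snd))
    exact (continuous_subtype_val.comp (continuous_snd.comp h1)).add
      (continuous_snd.sub (continuous_subtype_val.comp (hproj.comp continuous_snd)))
  have gm : ∀ θ, StrictMono fun x => g (θ, x) := by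
    intro θ x y hxy
    have h1 : projIcc a b hab x ≤ projIcc a b hab y := monotone_projIcc hab hxy.le
    have h2 : x - (projIcc a b hab x : ℝ) ≤ y - (projIcc a b hab y : ℝ) := by
      simp only [coe_projIcc]
      rcases max_cases a (min b x) with ⟨e1, _⟩ | ⟨e1, _⟩ <;>
      rcases max_cases a (min b y) with ⟨e2, _⟩ | ⟨e2, _⟩ <;>
      rcases min_cases b x with ⟨e3, _⟩ | ⟨e3, _⟩ <;>
      rcases min_cases b y with ⟨e4, _⟩ | ⟨e4, _⟩ <;> rw [e1, e2] <;> linarith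
    simp only [hg]
    rcases h1.lt_or_eq with h | h
    · have := hmono θ h
      have h3 : ((f (θ, projIcc a b hab x)).2 : ℝ) < (f (θ, projIcc a b hab y)).2 := this
      linarith
    · rw [h]; linarith
  have gs : ∀ θ, Surjective fun x => g (θ, x) := by
    intro θ
    have hcx : Continuous fun x => g (θ, x) := gc.comp (Continuous.prodMk_right θ)
    refine hcx.surjective ?_ ?_
    · refine Filter.tendsto_atTop_mono (f := fun x => x + (a - b)) ?_
        (Filter.tendsto_atTop_add_const_right _ _ Filter.tendsto_id)
      intro x
      have h1 := (f (θ, projIcc a b hab x)).2.2.1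
      have h2 := (projIcc a b hab x).2.2
      simp only [hg]; linarith
    · refine Filter.tendsto_atBot_mono (g := fun x => g (θ, x)) (f := fun x => x + (b - a)) ?_
        (Filter.tendsto_atBot_add_const_right _ _ Filter.tendsto_id)
      intro x
      have h1 := (f (θ, projIcc a b hab x)).2.2.2
      have h2 := (projIcc a b hab x).2.1
      simp only [hg]; linarith
  have bij : Bijective fun p : Θ × ℝ => (α p.1, g p) := by
    constructor
    · rintro ⟨θ, x⟩ ⟨θ', x'⟩ h
      obtain ⟨h1, h2⟩ := Prod.mk.inj h
      obtain rfl : θ = θ' := α.injective h1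
      exact congrArg _ ((gm θ).injective h2)
    · rintro ⟨θ, y⟩
      obtain ⟨x, hx⟩ := gs (α.symm θ) y
      exact ⟨(α.symm θ, x), Prod.ext (by simp) hx⟩
  let e : (Θ × ℝ) ≃ (Θ × ℝ) := Equiv.ofBijective _ bij
  have e1 : ∀ p, (e.symm p).1 = α.symm p.1 := by
    intro p
    have := congrArg Prod.fst (e.apply_symm_apply p)
    have h : α (e.symm p).1 = p.1 := this
    rw [← h]; simp
  have e2 : ∀ p, g (α.symm p.1, (e.symm p).2) = p.2 := by
    intro p
    rw [← e1]
    exact congrArg Prod.snd (e.apply_symm_apply p)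
  have esc : Continuous e.symm := by
    have : Continuous fun p => (e.symm p).2 := by
      rw [continuous_iff_continuousAt]
      intro p0
      rw [ContinuousAt, tendsto_order]
      have key : ∀ c : ℝ, Continuous fun p : Θ × ℝ => g (α.symm p.1, c) := fun c =>
        gc.comp ((α.symm.continuous.comp continuous_fst).prodMk continuous_const)
      constructor
      · intro c hcl
        have h1 : g (α.symm p0.1, c) < p0.2 := by
          rw [← e2 p0]; exact gm _ hcl
        filter_upwards [(key c).continuousAt.eventually_lt continuousAt_snd h1] with p hp
        rw [← e2 p] at hp
        exact (gm _).lt_iff_lt.1 hp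
      · intro c hcl
        have h1 : p0.2 < g (α.symm p0.1, c) := by
          rw [← e2 p0]; exact gm _ hcl
        filter_upwards [continuousAt_snd.eventually_lt (key c).continuousAt h1] with p hp
        rw [← e2 p] at hp
        exact (gm _).lt_iff_lt.1 hp
    have h2 : (e.symm : Θ × ℝ → Θ × ℝ) = fun p => (α.symm p.1, (e.symm p).2) := by
      funext p; exact Prod.ext (e1 p) rfl
    rw [h2]
    exact (α.symm.continuous.comp continuous_fst).prodMk this
  refine ⟨⟨e, (α.continuous.comp continuous_fst).prodMk gc, esc⟩, ?_, fun p => rfl, gm⟩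
  intro p
  refine Prod.ext rfl ?_
  change g (p.1, (p.2 : ℝ)) = _
  simp [hg, projIcc_val]

lemma bu_family {Θ : Type} [MetricSpace Θ] (α : Θ ≃ₜ Θ) {a b : ℝ} (hab : a ≤ b)
    (f : Θ × ↥(Icc a b) → Θ × ↥(Icc a b)) (hf : ForcedIncreasing (⇑α) f)
    (γ : Θ → ↥(Icc a b)) (hγinv : ∀ θ : Θ, f (θ, γ θ) = (α θ, γ (α θ))) :
    ∃ P : ℤ → (Θ × ℝ) → (Θ × ℝ), (∀ n, Continuous (P n)) ∧ (∀ p, P 0 p = p) ∧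
      (∀ n, ∀ p : Θ × ↥(Icc a b), P n ((f p).1, ((f p).2 : ℝ)) = P (n - 1) (p.1, (p.2 : ℝ))) ∧
      (∀ n p, (P n p).1 = zIter α.toEquiv (-n) p.1) ∧
      (∀ n θ, StrictMono fun x => (P n (θ, x)).2) ∧
      (∀ n θ x, (P n (θ, x)).2 = γ (P n (θ, x)).1 ↔ x = γ θ) := by
  obtain ⟨G, hG, hG1, hGm⟩ := bu_extend α hab f hf
  have s1 : ∀ p, (G.symm p).1 = α.symm p.1 := by
    intro p
    have := hG1 (G.symm p)
    rw [G.apply_symm_apply] at this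
    rw [this]; simp
  have sm : ∀ θ, StrictMono fun x => (G.symm (θ, x)).2 := by
    intro θ x y hxy
    by_contra hcon
    push Not at hcon
    have h1 : ∀ z, G (α.symm θ, (G.symm (θ, z)).2) = (θ, z) := by
      intro z
      have : (α.symm θ, (G.symm (θ, z)).2) = G.symm (θ, z) := Prod.ext (s1 (θ, z)).symm rfl
      rw [this]; simp
    have := (hGm (α.symm θ)).monotone hcon
    simp only [h1] at this
    linarith
  have gγ : ∀ θ, G (θ, (γ θ : ℝ)) = (α θ, (γ (α θ) : ℝ)) := by
    intro θ
    rw [hG (θ, γ θ), hγinv]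
  have sγ : ∀ θ, G.symm (θ, (γ θ : ℝ)) = (α.symm θ, (γ (α.symm θ) : ℝ)) := by
    intro θ
    rw [Homeomorph.symm_apply_eq, gγ]; simp
  have z1 : ∀ (n : ℤ) p, (((G ^ n : (Θ × ℝ) ≃ₜ (Θ × ℝ))) p).1 = zIter α.toEquiv n p.1 := by
    intro n
    induction n using Int.induction_on with
    | zero => intro p; simp [zIter]
    | succ n ih => intro p; rw [zpow_add_one, Homeomorph.mul_apply, ih, hG1, zIter, zIter, zpow_add_one]; rfl
    | pred n ih => intro p; rw [zpow_sub_one, Homeomorph.mul_apply, ih, zIter, zIter, zpow_sub_one]; exact congrArg _ (s1 p)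
  have zm : ∀ (n : ℤ) θ, StrictMono fun x => ((G ^ n : (Θ × ℝ) ≃ₜ (Θ × ℝ)) (θ, x)).2 := by
    intro n
    induction n using Int.induction_on with
    | zero => intro θ x y h; simpa using h
    | succ n ih =>
      intro θ x y h
      simp only [zpow_add_one, Homeomorph.mul_apply]
      have := ih (α θ) (hGm θ h)
      have e : ∀ z, (α θ, (G (θ, z)).2) = G (θ, z) := fun z => Prod.ext (hG1 (θ, z)).symm rfl
      simpa only [e] using this
    | pred n ih =>
      intro θ x y h
      simp only [zpow_sub_one, Homeomorph.mul_apply]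
      have := ih (α.symm θ) (sm θ h)
      have e : ∀ z, (α.symm θ, (G.symm (θ, z)).2) = G.symm (θ, z) :=
        fun z => Prod.ext (s1 (θ, z)).symm rfl
      simp only [e] at this
      exact this
  have zγ : ∀ (n : ℤ) θ, ((G ^ n : (Θ × ℝ) ≃ₜ (Θ × ℝ)) (θ, (γ θ : ℝ))).2 =
      γ ((G ^ n : (Θ × ℝ) ≃ₜ (Θ × ℝ)) (θ, (γ θ : ℝ))).1 := by
    intro n
    induction n using Int.induction_on with
    | zero => intro θ; simp
    | succ n ih =>
      intro θ
      simp only [zpow_add_one, Homeomorph.mul_apply, gγ, ih]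
    | pred n ih =>
      intro θ
      simp only [zpow_sub_one, Homeomorph.mul_apply]
      have : (G⁻¹ : (Θ × ℝ) ≃ₜ (Θ × ℝ)) (θ, (γ θ : ℝ)) = _ := sγ θ
      rw [this, ih]
  refine ⟨fun n => (G ^ (-n) : (Θ × ℝ) ≃ₜ (Θ × ℝ)), fun n => Homeomorph.continuous _, ?_, ?_,
    fun n p => z1 _ _, fun n θ => zm _ _, ?_⟩
  · intro p; simp
  · intro n p
    have : (((f p).1, ((f p).2 : ℝ)) : Θ × ℝ) = G (p.1, (p.2 : ℝ)) := by
      rw [hG, hf.2.1]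
    simp only [this]
    rw [← Homeomorph.mul_apply, ← zpow_add_one]
    congr 2; ring
  · intro n θ x
    constructor
    · intro h
      apply (zm (-n) θ).injective
      simp only
      rw [zγ, h, z1, z1]
    · rintro rfl; exact zγ _ _

lemma bu_rho {Θ : Type} [MetricSpace Θ] (θs : Θ)
    (hnoniso : ∀ ε > (0 : ℝ), ∃ θ : Θ, θ ≠ θs ∧ dist θ θs < ε) :
    ∃ ρ : Θ → ℝ, (∀ θ, ρ θ ∈ Icc (0 : ℝ) 1) ∧ (∀ θ, θ ≠ θs → ContinuousAt ρ θ) ∧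
      ∃ u v : ℕ → Θ, (∀ n, u n ≠ θs) ∧ (∀ n, v n ≠ θs) ∧
        Filter.Tendsto u Filter.atTop (nhds θs) ∧ Filter.Tendsto v Filter.atTop (nhds θs) ∧
        (∀ n, ρ (u n) = 0) ∧ (∀ n, ρ (v n) = 1) := by
  have : Nonempty Θ := ⟨θs⟩
  choose! c hc1 hc2 using hnoniso
  obtain ⟨s, hs⟩ : ∃ s : ℕ → {θ : Θ // θ ≠ θs},
      ∀ n, dist (s (n + 1)).1 θs < dist (s n).1 θs / 2 :=
    ⟨fun n => Nat.rec ⟨c 1, hc1 1 one_pos⟩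
      (fun _ p => ⟨c (dist p.1 θs / 2), hc1 _ (half_pos (dist_pos.2 p.2))⟩) n,
      fun n => hc2 _ (half_pos (dist_pos.2 (Subtype.prop (p := fun θ => θ ≠ θs) _)))⟩
  have hanti : StrictAnti fun n => dist (s n).1 θs := by
    refine strictAnti_nat_of_succ_lt fun n => ?_
    have := hs n
    have := dist_pos.2 (s n).2
    linarith
  have hinj : Injective fun n => (s n).1 := by
    intro m n h
    exact hanti.injective (congrArg (fun z => dist z θs) h)
  have hlim : Filter.Tendsto (fun n => (s n).1) Filter.atTop (nhds θs) := by
    rw [tendsto_iff_dist_tendsto_zero]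
    have hb : ∀ n, dist (s n).1 θs ≤ dist (s 0).1 θs * (1 / 2 : ℝ) ^ n := by
      intro n
      induction n with
      | zero => simp
      | succ n ih => rw [pow_succ]; have := hs n; linarith
    refine squeeze_zero (fun _ => dist_nonneg) hb ?_
    simpa using (tendsto_pow_atTop_nhds_zero_of_lt_one (r := (1 / 2 : ℝ)) (by norm_num)
      (by norm_num)).const_mul (dist (s 0).1 θs)
  let u : ℕ → Θ := fun n => (s (2 * n)).1
  let v : ℕ → Θ := fun n => (s (2 * n + 1)).1
  have hu : Filter.Tendsto u Filter.atTop (nhds θs) :=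
    hlim.comp (Filter.tendsto_atTop_mono (fun n => by simp only [id]; omega) Filter.tendsto_id)
  have hv : Filter.Tendsto v Filter.atTop (nhds θs) :=
    hlim.comp (g := fun n => (s n).1) (f := fun n => 2 * n + 1) (Filter.tendsto_atTop_mono (fun n => by simp only [id]; omega) Filter.tendsto_id)
  have hcu : closure (range u) ⊆ insert θs (range u) :=
    closure_minimal (subset_insert _ _) hu.isCompact_insert_range.isClosed
  have hcv : closure (range v) ⊆ insert θs (range v) :=
    closure_minimal (subset_insert _ _) hv.isCompact_insert_range.isClosed
  have hpos : ∀ θ, θ ≠ θs → Metric.infDist θ (range u) + Metric.infDist θ (range v) ≠ 0 := by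
    intro θ hθ h
    have a1 := Metric.infDist_nonneg (x := θ) (s := range u)
    have a2 := Metric.infDist_nonneg (x := θ) (s := range v)
    have b1 : θ ∈ closure (range u) :=
      (Metric.mem_closure_iff_infDist_zero (range_nonempty u)).2 (by linarith)
    have b2 : θ ∈ closure (range v) :=
      (Metric.mem_closure_iff_infDist_zero (range_nonempty v)).2 (by linarith)
    rcases hcu b1 with h1 | ⟨m, hm⟩
    · exact hθ h1
    rcases hcv b2 with h1 | ⟨n, hn⟩
    · exact hθ h1
    have := hinj (a₁ := 2 * m) (a₂ := 2 * n + 1) (hm.trans hn.symm)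
    omega
  refine ⟨fun θ => Metric.infDist θ (range u) /
    (Metric.infDist θ (range u) + Metric.infDist θ (range v)), ?_, ?_, u, v, fun n => (s (2 * n)).2,
    fun n => (s (2 * n + 1)).2, hu, hv, ?_, ?_⟩
  · intro θ
    have a1 := Metric.infDist_nonneg (x := θ) (s := range u)
    have a2 := Metric.infDist_nonneg (x := θ) (s := range v)
    exact ⟨by positivity, div_le_one_of_le₀ (by linarith) (by linarith)⟩
  · intro θ hθ
    exact (Metric.continuous_infDist_pt _).continuousAt.div
      ((Metric.continuous_infDist_pt _).add (Metric.continuous_infDist_pt _)).continuousAt (hpos θ hθ)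
  · intro n
    simp [Metric.infDist_zero_of_mem (mem_range_self (f := u) n)]
  · intro n
    have h0 := hpos (v n) (s (2 * n + 1)).2
    rw [Metric.infDist_zero_of_mem (mem_range_self (f := v) n), add_zero] at h0
    simp [Metric.infDist_zero_of_mem (mem_range_self (f := v) n), div_self h0]

lemma bu_phi {Θ : Type} [MetricSpace Θ] (θs : Θ)
    (hnoniso : ∀ ε > (0 : ℝ), ∃ θ : Θ, θ ≠ θs ∧ dist θ θs < ε)
    (γ : Θ → ℝ) (hγ : Continuous γ) :
    ∃ φ : Θ × ℝ → unitInterval, (∀ p, p ≠ (θs, γ θs) → ContinuousAt φ p) ∧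
      (∀ θ, Monotone fun x => φ (θ, x)) ∧ (∀ x, x < γ θs → φ (θs, x) = 0) ∧
      (∀ x, γ θs < x → φ (θs, x) = 1) ∧
      ∃ u v : ℕ → Θ, (∀ n, u n ≠ θs) ∧ (∀ n, v n ≠ θs) ∧
        Filter.Tendsto u Filter.atTop (nhds θs) ∧ Filter.Tendsto v Filter.atTop (nhds θs) ∧
        (∀ n, φ (u n, γ (u n)) = 0) ∧ (∀ n, φ (v n, γ (v n)) = 1) := by
  classical
  obtain ⟨ρ, hρ, hρc, u, v, hu, hv, hul, hvl, hu0, hv1⟩ := bu_rho θs hnoniso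
  let ψ : Θ × ℝ → unitInterval := fun p =>
    projIcc 0 1 zero_le_one (ρ p.1 + (p.2 - γ p.1) / dist p.1 θs)
  let φ : Θ × ℝ → unitInterval := fun p =>
    if p.1 = θs then (if γ θs < p.2 then 1 else 0) else ψ p
  have φs : ∀ x, φ (θs, x) = if γ θs < x then 1 else 0 := fun x => by simp [φ]
  have φn : ∀ p : Θ × ℝ, p.1 ≠ θs → φ p = ψ p := fun p hp => by simp [φ, hp]
  refine ⟨φ, ?_, ?_, ?_, ?_, u, v, hu, hv, hul, hvl, ?_, ?_⟩
  · rintro ⟨θ, x⟩ hp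
    by_cases hθ : θ = θs
    · subst hθ
      have hx : x ≠ γ θ := fun h => hp (by rw [h])
      have cd : Continuous fun p : Θ × ℝ => dist p.1 θ := continuous_fst.dist continuous_const
      have cg : Continuous fun p : Θ × ℝ => p.2 - γ p.1 :=
        continuous_snd.sub (hγ.comp continuous_fst)
      rcases hx.lt_or_gt with hx | hx
      · refine (continuousAt_const (y := (0 : unitInterval))).congr ?_
        have h1 : ∀ᶠ p : Θ × ℝ in nhds (θ, x), p.2 - γ p.1 + dist p.1 θ < 0 :=
          (cg.add cd).continuousAt.eventually_lt continuousAt_const (by simp; linarith)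
        filter_upwards [h1] with p hp1
        by_cases h : p.1 = θ
        · obtain ⟨q, y⟩ := p
          simp only at h
          subst h
          simp only [dist_self, add_zero] at hp1
          rw [φs, if_neg (by linarith)]
        · rw [φn p h]
          have hd := dist_pos.2 h
          symm
          apply projIcc_of_le_left
          have : (p.2 - γ p.1) / dist p.1 θ ≤ -1 := by
            rw [div_le_iff₀ hd]; linarith
          linarith [(hρ p.1).2]
      · refine (continuousAt_const (y := (1 : unitInterval))).congr ?_
        have h1 : ∀ᶠ p : Θ × ℝ in nhds (θ, x), dist p.1 θ < p.2 - γ p.1 :=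
          cd.continuousAt.eventually_lt cg.continuousAt (by simp; linarith)
        filter_upwards [h1] with p hp1
        by_cases h : p.1 = θ
        · obtain ⟨q, y⟩ := p
          simp only at h
          subst h
          simp only [dist_self] at hp1
          rw [φs, if_pos (by linarith)]
        · rw [φn p h]
          have hd := dist_pos.2 h
          symm
          apply projIcc_of_right_le
          have : 1 ≤ (p.2 - γ p.1) / dist p.1 θ := by
            rw [le_div_iff₀ hd]; linarith
          linarith [(hρ p.1).1]
    · have h1 : ∀ᶠ p : Θ × ℝ in nhds (θ, x), p.1 ≠ θs :=
        continuousAt_fst.eventually_ne hθ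
      have h2 : ContinuousAt ψ (θ, x) := by
        refine (continuous_projIcc.continuousAt).comp ?_
        refine ContinuousAt.add ?_ ?_
        · exact ContinuousAt.comp (f := Prod.fst) (g := ρ) (hρc θ hθ) continuousAt_fst
        · exact ((continuous_snd.sub (hγ.comp continuous_fst)).continuousAt).div
            ((continuous_fst.dist continuous_const).continuousAt) (dist_ne_zero.2 hθ)
      refine h2.congr ?_
      filter_upwards [h1] with p hp
      rw [φn p hp]
  · intro θ x y hxy
    by_cases hθ : θ = θs
    · subst hθ
      simp only [φs]
      split_ifs with h1 h2
      · exact le_rfl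
      · exact absurd (h1.trans_le hxy) h2
      · exact zero_le_one
      · exact le_rfl
    · simp only [φn (θ, _) hθ]
      refine monotone_projIcc _ ?_
      simp only
      have hd := dist_pos.2 hθ
      gcongr
  · intro x hx
    rw [φs, if_neg (by linarith)]
  · intro x hx
    rw [φs, if_pos hx]
  · intro n
    rw [φn _ (hu n)]
    exact projIcc_of_le_left _ (by simp [hu0])
  · intro n
    rw [φn _ (hv n)]
    exact projIcc_of_right_le _ (by simp [hv1])

lemma bu_closed {X Z : Type*} [TopologicalSpace X] [TopologicalSpace Z] [T1Space Z]
    (g : X → Z) (hg : Continuous g) (s : X → unitInterval) (hs : Continuous s)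
    (φ : Z → unitInterval) (z : Z) (hφ : ∀ p, p ≠ z → ContinuousAt φ p) :
    IsClosed {x | g x ≠ z → s x = φ (g x)} := by
  rw [← isOpen_compl_iff, isOpen_iff_mem_nhds]
  intro x hx
  simp only [mem_compl_iff, mem_ofPred_eq, Classical.not_imp] at hx
  have h1 : ∀ᶠ y in nhds x, g y ≠ z := hg.continuousAt.eventually_ne hx.1
  have h2 : ContinuousAt (fun y => φ (g y)) x :=
    ContinuousAt.comp (g := φ) (f := g) (hφ _ hx.1) hg.continuousAt
  have h3 : ∀ᶠ y in nhds x, s y ≠ φ (g y) := by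
    have := (hs.continuousAt.prodMk h2).eventually
      (isClosed_diagonal.isOpen_compl.mem_nhds (by simpa using hx.2))
    simpa using this
  filter_upwards [h1, h3] with y hy1 hy2
  simp only [mem_compl_iff, mem_ofPred_eq, Classical.not_imp]
  exact ⟨hy1, hy2⟩

/-- The data used for the blow-up. -/
structure BUData {Θ : Type} [MetricSpace Θ] (a b : ℝ) (P : ℤ → (Θ × ℝ) → (Θ × ℝ))
    (φ : Θ × ℝ → unitInterval) (θs : Θ) (xs : ℝ) : Prop where
  hPc : ∀ n, Continuous (P n)
  hPm : ∀ n θ, StrictMono fun x => (P n (θ, x)).2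
  hPf : ∀ n θ x x', (P n (θ, x)).1 = (P n (θ, x')).1
  hPu : ∀ m n p, P m p = (θs, xs) → P n p = (θs, xs) → m = n
  hPa : ∀ n θ, P n (θ, a) ≠ (θs, xs)
  hPb : ∀ n θ, P n (θ, b) ≠ (θs, xs)
  hφc : ∀ p, p ≠ (θs, xs) → ContinuousAt φ p
  hφm : ∀ θ, Monotone fun x => φ (θ, x)
  hφ0 : ∀ x, x < xs → φ (θs, x) = 0
  hφ1 : ∀ x, xs < x → φ (θs, x) = 1

/-- The blown-up space. -/
def buE {Θ : Type} (a b : ℝ) (P : ℤ → (Θ × ℝ) → (Θ × ℝ))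
    (φ : Θ × ℝ → unitInterval) (ps : Θ × ℝ) : Set (Θ × ↥(Icc a b) × (ℤ → unitInterval)) :=
  {e | ∀ n, P n (e.1, (e.2.1 : ℝ)) ≠ ps → e.2.2 n = φ (P n (e.1, (e.2.1 : ℝ)))}

lemma bu_lt {Θ : Type} [MetricSpace Θ] {a b : ℝ} {P : ℤ → (Θ × ℝ) → (Θ × ℝ)}
    {φ : Θ × ℝ → unitInterval} {θs : Θ} {xs : ℝ} (D : BUData a b P φ θs xs)
    {θ : Θ} {x x' : ↥(Icc a b)} {t t' : ℤ → unitInterval}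
    (h : (θ, x, t) ∈ buE a b P φ (θs, xs)) (h' : (θ, x', t') ∈ buE a b P φ (θs, xs))
    (hx : x < x') : t ≤ t' := by
  intro n
  have hx' : (x : ℝ) < x' := hx
  have hm := D.hPm n θ hx'
  have hf := D.hPf n θ x x'
  simp only at hm
  have e1 := h n
  have e2 := h' n
  simp only at e1 e2
  by_cases c1 : P n (θ, (x : ℝ)) = (θs, xs)
  · rw [c1] at hm hf
    have e3 : P n (θ, (x' : ℝ)) = (θs, (P n (θ, (x' : ℝ))).2) := Prod.ext hf.symm rfl
    have : t' n = 1 := by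
      rw [e2 (fun hh => by rw [hh] at hm; exact lt_irrefl _ hm), e3]
      exact D.hφ1 _ hm
    rw [this]; exact le_top
  by_cases c2 : P n (θ, (x' : ℝ)) = (θs, xs)
  · rw [c2] at hm hf
    have e3 : P n (θ, (x : ℝ)) = (θs, (P n (θ, (x : ℝ))).2) := Prod.ext hf rfl
    have : t n = 0 := by
      rw [e1 c1, e3]
      exact D.hφ0 _ hm
    rw [this]; exact bot_le
  rw [e1 c1, e2 c2]
  have := D.hφm (P n (θ, (x : ℝ))).1 hm.le
  have e3 : P n (θ, (x' : ℝ)) = ((P n (θ, (x : ℝ))).1, (P n (θ, (x' : ℝ))).2) :=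
    Prod.ext hf.symm rfl
  rw [e3]
  exact this

lemma bu_total {Θ : Type} [MetricSpace Θ] {a b : ℝ} {P : ℤ → (Θ × ℝ) → (Θ × ℝ)}
    {φ : Θ × ℝ → unitInterval} {θs : Θ} {xs : ℝ} (D : BUData a b P φ θs xs)
    {θ : Θ} {z z' : ↥(Icc a b) × (ℤ → unitInterval)}
    (h : (θ, z) ∈ buE a b P φ (θs, xs)) (h' : (θ, z') ∈ buE a b P φ (θs, xs)) :
    z ≤ z' ∨ z' ≤ z := by
  obtain ⟨x, t⟩ := z
  obtain ⟨x', t'⟩ := z'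
  rcases lt_trichotomy x x' with hx | hx | hx
  · exact Or.inl ⟨hx.le, bu_lt D h h' hx⟩
  · subst hx
    by_cases hn : ∃ n, P n (θ, (x : ℝ)) = (θs, xs)
    · obtain ⟨n, hn⟩ := hn
      have hne : ∀ m, m ≠ n → t m = t' m := by
        intro m hm
        have : P m (θ, (x : ℝ)) ≠ (θs, xs) := fun hh => hm (D.hPu _ _ _ hh hn)
        exact (h m this).trans (h' m this).symm
      rcases le_total (t n) (t' n) with hl | hl
      · refine Or.inl ⟨le_rfl, fun m => ?_⟩
        by_cases hm : m = n
        · subst hm; exact hl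
        · exact (hne m hm).le
      · refine Or.inr ⟨le_rfl, fun m => ?_⟩
        by_cases hm : m = n
        · subst hm; exact hl
        · exact (hne m hm).ge
    · push Not at hn
      exact Or.inl ⟨le_rfl, fun m => ((h m (hn m)).trans (h' m (hn m)).symm).le⟩
  · have hge := bu_lt D h' h hx
    exact Or.inr ⟨hx.le, hge⟩

/-- The weighted sum coordinate. -/
def buS {a b : ℝ} (w : ℤ → ℝ) (z : ↥(Icc a b) × (ℤ → unitInterval)) : ℝ :=
  (z.1 : ℝ) + ∑' n, w n * (z.2 n : ℝ)

lemma buS_cont {a b : ℝ} {w : ℤ → ℝ} (hw : ∀ n, 0 < w n) (hs : Summable w) :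
    Continuous (buS (a := a) (b := b) w) := by
  refine (continuous_subtype_val.comp continuous_fst).add ?_
  refine continuous_tsum (u := w) (fun n => ?_) hs (fun n z => ?_)
  · exact continuous_const.mul
      (continuous_subtype_val.comp ((continuous_apply n).comp continuous_snd))
  · rw [Real.norm_eq_abs, abs_of_nonneg (mul_nonneg (hw n).le (z.2 n).2.1)]
    exact mul_le_of_le_one_right (hw n).le (z.2 n).2.2

lemma buS_mono {a b : ℝ} {w : ℤ → ℝ} (hw : ∀ n, 0 < w n) (hs : Summable w) :
    StrictMono (buS (a := a) (b := b) w) := by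
  intro z z' hlt
  have hsum : ∀ t : ℤ → unitInterval, Summable fun n => w n * (t n : ℝ) := fun t =>
    Summable.of_nonneg_of_le (fun n => mul_nonneg (hw n).le (t n).2.1)
      (fun n => mul_le_of_le_one_right (hw n).le (t n).2.2) hs
  have hle : ∀ n, w n * (z.2 n : ℝ) ≤ w n * (z'.2 n : ℝ) := fun n =>
    mul_le_mul_of_nonneg_left (hlt.le.2 n) (hw n).le
  rcases Prod.lt_iff.1 hlt with ⟨h1, h2⟩ | ⟨h1, h2⟩
  · have h1' : (z.1 : ℝ) < z'.1 := h1
    exact add_lt_add_of_lt_of_le h1' ((hsum _).tsum_le_tsum hle (hsum _))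
  · have h1' : (z.1 : ℝ) ≤ z'.1 := h1
    obtain ⟨_, n, hn⟩ := Pi.lt_def.1 h2
    have hn' : (z.2 n : ℝ) < z'.2 n := hn
    exact add_lt_add_of_le_of_lt h1' (Summable.tsum_lt_tsum hle
      (mul_lt_mul_of_pos_left hn' (hw n)) (hsum _) (hsum _))

lemma bu_fiber_surj {Θ : Type} [MetricSpace Θ] {a b : ℝ} {P : ℤ → (Θ × ℝ) → (Θ × ℝ)}
    {φ : Θ × ℝ → unitInterval} {θs : Θ} {xs : ℝ} (D : BUData a b P φ θs xs)
    (hcl : IsClosed (buE a b P φ (θs, xs)))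
    {w : ℤ → ℝ} (hw : ∀ n, 0 < w n) (hs : Summable w)
    (θ : Θ) (z0 z1 : ↥(Icc a b) × (ℤ → unitInterval))
    (h0 : (θ, z0) ∈ buE a b P φ (θs, xs)) (h1 : (θ, z1) ∈ buE a b P φ (θs, xs))
    (v : ℝ) (hv0 : buS w z0 ≤ v) (hv1 : v ≤ buS w z1) :
    ∃ z, (θ, z) ∈ buE a b P φ (θs, xs) ∧ buS w z = v := by
  by_contra hcon
  push Not at hcon
  have hSc := buS_cont (a := a) (b := b) hw hs
  have hSm := buS_mono (a := a) (b := b) hw hs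
  set K : Set (↥(Icc a b) × (ℤ → unitInterval)) := {z | (θ, z) ∈ buE a b P φ (θs, xs)} with hK
  have hKc : IsClosed K := hcl.preimage (Continuous.prodMk_right θ)
  obtain ⟨p, hp, hpm⟩ := (hKc.inter (isClosed_le hSc (continuous_const (y := v)))).isCompact.exists_isMaxOn
    ⟨z0, h0, hv0⟩ hSc.continuousOn
  obtain ⟨q, hq, hqm⟩ := (hKc.inter (isClosed_le (continuous_const (y := v)) hSc)).isCompact.exists_isMinOn
    ⟨z1, h1, hv1⟩ hSc.continuousOn
  have hpv : buS w p < v := lt_of_le_of_ne hp.2 (hcon p hp.1)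
  have hqv : v < buS w q := lt_of_le_of_ne hq.2 (hcon q hq.1).symm
  have hno : ∀ z ∈ K, p < z → z < q → False := by
    intro z hz hpz hzq
    rcases le_total (buS w z) v with hle | hle
    · exact absurd (hpm ⟨hz, hle⟩) (not_le.2 (hSm hpz))
    · exact absurd (hqm ⟨hz, hle⟩) (not_le.2 (hSm hzq))
  have hpq : p < q := by
    rcases bu_total D hp.1 hq.1 with h | h
    · exact lt_of_le_of_ne h (fun hh => by rw [hh] at hpv; linarith)
    · have := hSm.monotone h
      linarith
  obtain ⟨x, t⟩ := p
  obtain ⟨x', t'⟩ := q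
  have hxx : x ≤ x' := hpq.le.1
  rcases hxx.lt_or_eq with hx | hx
  · have hx' : (x : ℝ) < x' := hx
    let y : ↥(Icc a b) := ⟨((x : ℝ) + x') / 2, by
      have := x.2.1; have := x'.2.2; constructor <;> linarith⟩
    have hxy : x < y := by
      change (x : ℝ) < ((x : ℝ) + x') / 2
      linarith
    have hyx : y < x' := by
      change ((x : ℝ) + x') / 2 < (x' : ℝ)
      linarith
    let τ : ℤ → unitInterval := fun n => φ (P n (θ, (y : ℝ)))
    have hy : (y, τ) ∈ K := fun n _ => rfl
    exact hno (y, τ) hy (Prod.lt_iff.2 (Or.inl ⟨hxy, bu_lt D hp.1 hy hxy⟩))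
      (Prod.lt_iff.2 (Or.inl ⟨hyx, bu_lt D hy hq.1 hyx⟩))
  · subst hx
    let τ : ℤ → unitInterval := fun n => ⟨((t n : ℝ) + t' n) / 2, by
      have h1 := (t n).2.1; have h2 := (t n).2.2
      have h3 := (t' n).2.1; have h4 := (t' n).2.2
      constructor <;> linarith⟩
    have hτ : (x, τ) ∈ K := by
      intro n hn
      have e1 := hp.1 n hn
      have e2 := hq.1 n hn
      simp only at e1 e2
      apply Subtype.ext
      change ((t n : ℝ) + t' n) / 2 = _
      rw [e1, e2]; simp
    have htt : t ≤ t' := hpq.le.2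
    have htt' : ∀ n, (t n : ℝ) ≤ t' n := fun n => htt n
    have hlt : t < t' := lt_of_le_of_ne htt (fun hh => by rw [hh] at hpq; exact lt_irrefl _ hpq)
    obtain ⟨_, n, hn⟩ := Pi.lt_def.1 hlt
    have hn' : (t n : ℝ) < t' n := hn
    refine hno (x, τ) hτ (Prod.lt_iff.2 (Or.inr ⟨le_rfl, Pi.lt_def.2 ⟨fun m => ?_, n, ?_⟩⟩))
      (Prod.lt_iff.2 (Or.inr ⟨le_rfl, Pi.lt_def.2 ⟨fun m => ?_, n, ?_⟩⟩))
    · change (t m : ℝ) ≤ ((t m : ℝ) + t' m) / 2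
      linarith [htt' m]
    · change (t n : ℝ) < ((t n : ℝ) + t' n) / 2
      linarith
    · change ((t m : ℝ) + t' m) / 2 ≤ (t' m : ℝ)
      linarith [htt' m]
    · change ((t n : ℝ) + t' n) / 2 < (t' n : ℝ)
      linarith

lemma bu_core {Θ : Type} [MetricSpace Θ] [CompactSpace Θ] {a b : ℝ} (hab : a < b)
    {P : ℤ → (Θ × ℝ) → (Θ × ℝ)}
    {φ : Θ × ℝ → unitInterval} {θs : Θ} {xs : ℝ} (D : BUData a b P φ θs xs) :
    ∃ Y : ↥(buE a b P φ (θs, xs)) ≃ₜ Θ × ↥(Icc a b), (∀ e, (Y e).1 = e.1.1) ∧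
      ∀ e e', e.1.1 = e'.1.1 → e.1.2 < e'.1.2 → (Y e).2 < (Y e').2 := by
  have hcl : IsClosed (buE a b P φ (θs, xs)) := by
    have : buE a b P φ (θs, xs) = ⋂ n, {e : Θ × ↥(Icc a b) × (ℤ → unitInterval) |
        P n (e.1, (e.2.1 : ℝ)) ≠ (θs, xs) → e.2.2 n = φ (P n (e.1, (e.2.1 : ℝ)))} := by
      ext e; simp [buE]
    rw [this]
    refine isClosed_iInter fun n => bu_closed _ ?_ _ ?_ φ _ D.hφc
    · exact (D.hPc n).comp (continuous_fst.prodMk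
        (continuous_subtype_val.comp (continuous_fst.comp continuous_snd)))
    · exact (continuous_apply n).comp (continuous_snd.comp continuous_snd)
  obtain ⟨w, hw, c, hwc, -⟩ := posSumOfEncodable (ε := 1) one_pos ℤ
  have hs : Summable w := hwc.summable
  have hSc := buS_cont (a := a) (b := b) hw hs
  have hSm := buS_mono (a := a) (b := b) hw hs
  let za : Θ → ↥(Icc a b) × (ℤ → unitInterval) :=
    fun θ => (⟨a, left_mem_Icc.2 hab.le⟩, fun n => φ (P n (θ, a)))
  let zb : Θ → ↥(Icc a b) × (ℤ → unitInterval) :=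
    fun θ => (⟨b, right_mem_Icc.2 hab.le⟩, fun n => φ (P n (θ, b)))
  have hza : ∀ θ, (θ, za θ) ∈ buE a b P φ (θs, xs) := fun θ n _ => rfl
  have hzb : ∀ θ, (θ, zb θ) ∈ buE a b P φ (θs, xs) := fun θ n _ => rfl
  have hzac : Continuous za := by
    refine continuous_const.prodMk (continuous_pi fun n => ?_)
    rw [continuous_iff_continuousAt]
    intro θ
    exact ContinuousAt.comp (g := φ) (f := fun θ => P n (θ, a)) (D.hφc _ (D.hPa n θ))
      ((D.hPc n).comp (Continuous.prodMk_left a)).continuousAt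
  have hzbc : Continuous zb := by
    refine continuous_const.prodMk (continuous_pi fun n => ?_)
    rw [continuous_iff_continuousAt]
    intro θ
    exact ContinuousAt.comp (g := φ) (f := fun θ => P n (θ, b)) (D.hφc _ (D.hPb n θ))
      ((D.hPc n).comp (Continuous.prodMk_left b)).continuousAt
  have hla : ∀ θ z, (θ, z) ∈ buE a b P φ (θs, xs) → za θ ≤ z := by
    rintro θ ⟨x, t⟩ hz
    have hx : (⟨a, left_mem_Icc.2 hab.le⟩ : ↥(Icc a b)) ≤ x := x.2.1
    refine ⟨hx, ?_⟩
    rcases hx.lt_or_eq with h | h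
    · exact bu_lt D (hza θ) hz h
    · subst h
      exact fun n => (hz n (D.hPa n θ)).ge
  have hlb : ∀ θ z, (θ, z) ∈ buE a b P φ (θs, xs) → z ≤ zb θ := by
    rintro θ ⟨x, t⟩ hz
    have hx : x ≤ (⟨b, right_mem_Icc.2 hab.le⟩ : ↥(Icc a b)) := x.2.2
    refine ⟨hx, ?_⟩
    rcases hx.lt_or_eq with h | h
    · exact bu_lt D hz (hzb θ) h
    · subst h
      exact fun n => (hz n (D.hPb n θ)).le
  have hlt : ∀ θ, buS w (za θ) < buS w (zb θ) := by
    intro θ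
    refine hSm (lt_of_le_of_ne (hla θ _ (hzb θ)) (fun h => ?_))
    have := congrArg (fun z : ↥(Icc a b) × (ℤ → unitInterval) => (z.1 : ℝ)) h
    simp only [za, zb] at this
    linarith
  let N : ↥(buE a b P φ (θs, xs)) → ℝ := fun e =>
    a + (b - a) * ((buS w e.1.2 - buS w (za e.1.1)) / (buS w (zb e.1.1) - buS w (za e.1.1)))
  have hN : ∀ e, N e ∈ Icc a b := by
    intro e
    have h1 := hSm.monotone (hla e.1.1 e.1.2 e.2)
    have h2 := hSm.monotone (hlb e.1.1 e.1.2 e.2)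
    have h3 := hlt e.1.1
    have h4 : 0 ≤ (buS w e.1.2 - buS w (za e.1.1)) / (buS w (zb e.1.1) - buS w (za e.1.1)) :=
      div_nonneg (by linarith) (by linarith)
    have h5 : (buS w e.1.2 - buS w (za e.1.1)) / (buS w (zb e.1.1) - buS w (za e.1.1)) ≤ 1 :=
      div_le_one_of_le₀ (by linarith) (by linarith)
    constructor
    · have := mul_nonneg (sub_pos.2 hab).le h4
      simp only [N]; linarith
    · have := mul_le_of_le_one_right (sub_pos.2 hab).le h5
      simp only [N]; linarith
  have hNc : Continuous N := by
    have c1 : Continuous fun e : ↥(buE a b P φ (θs, xs)) => e.1.1 :=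
      continuous_fst.comp continuous_subtype_val
    have c2 : Continuous fun e : ↥(buE a b P φ (θs, xs)) => e.1.2 :=
      continuous_snd.comp continuous_subtype_val
    refine continuous_const.add (continuous_const.mul (Continuous.div ?_ ?_ ?_))
    · exact (hSc.comp c2).sub (hSc.comp (hzac.comp c1))
    · exact (hSc.comp (hzbc.comp c1)).sub (hSc.comp (hzac.comp c1))
    · intro e
      exact (sub_pos.2 (hlt _)).ne'
  let F : ↥(buE a b P φ (θs, xs)) → Θ × ↥(Icc a b) := fun e => (e.1.1, ⟨N e, hN e⟩)
  have hFc : Continuous F :=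
    (continuous_fst.comp continuous_subtype_val).prodMk (hNc.subtype_mk _)
  have hFm : ∀ e e', e.1.1 = e'.1.1 → e.1.2 < e'.1.2 → (F e).2 < (F e').2 := by
    intro e e' h1 h2
    change N e < N e'
    have h3 := hSm h2
    have h4 := sub_pos.2 (hlt e'.1.1)
    have h5 := sub_pos.2 hab
    simp only [N, h1]
    gcongr
  have hFb : Bijective F := by
    constructor
    · rintro ⟨⟨θ, z⟩, he⟩ ⟨⟨θ', z'⟩, he'⟩ h
      have h1 : θ = θ' := congrArg Prod.fst h
      subst h1
      have : z = z' := by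
        by_contra hne
        rcases bu_total D he he' with hl | hl
        · have := hFm ⟨(θ, z), he⟩ ⟨(θ, z'), he'⟩ rfl (lt_of_le_of_ne hl hne)
          rw [h] at this; exact lt_irrefl _ this
        · have := hFm ⟨(θ, z'), he'⟩ ⟨(θ, z), he⟩ rfl (lt_of_le_of_ne hl (Ne.symm hne))
          rw [h] at this; exact lt_irrefl _ this
      subst this; rfl
    · rintro ⟨θ, y⟩
      have h4 := sub_pos.2 (hlt θ)
      have h5 := sub_pos.2 hab
      have hr0 : 0 ≤ ((y : ℝ) - a) / (b - a) := div_nonneg (by linarith [y.2.1]) h5.le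
      have hr1 : ((y : ℝ) - a) / (b - a) ≤ 1 := div_le_one_of_le₀ (by linarith [y.2.2]) h5.le
      obtain ⟨z, hz, hzv⟩ := bu_fiber_surj D hcl hw hs θ (za θ) (zb θ) (hza θ) (hzb θ)
        (buS w (za θ) + ((y : ℝ) - a) / (b - a) * (buS w (zb θ) - buS w (za θ)))
        (by have := mul_nonneg hr0 h4.le; linarith)
        (by have := mul_le_of_le_one_left h4.le hr1; linarith)
      refine ⟨⟨(θ, z), hz⟩, Prod.ext rfl (Subtype.ext ?_)⟩
      change a + (b - a) * ((buS w z - buS w (za θ)) / (buS w (zb θ) - buS w (za θ))) = y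
      rw [hzv]
      field_simp
      ring
  have : CompactSpace ↥(buE a b P φ (θs, xs)) := isCompact_iff_compactSpace.1 hcl.isCompact
  exact ⟨Continuous.homeoOfEquivCompactToT2 (f := Equiv.ofBijective F hFb) hFc,
    fun e => rfl, hFm⟩

lemma bu_off_orbit {Θ : Type} [MetricSpace Θ] [CompactSpace Θ]
    (α : Θ ≃ₜ Θ) (θs : Θ)
    (hnoniso : ∀ ε > (0 : ℝ), ∃ θ : Θ, θ ≠ θs ∧ dist θ θs < ε) :
    ∃ θ, ∀ n : ℤ, zIter α.toEquiv n θ ≠ θs := by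
  by_contra hcon
  push Not at hcon
  have : Nonempty Θ := ⟨θs⟩
  have hzc : ∀ n : ℤ, Continuous (zIter α.toEquiv n) := by
    intro n
    have hc : ∀ (β : Equiv.Perm Θ), Continuous β → ∀ k : ℕ, Continuous (β ^ k : Equiv.Perm Θ) := by
      intro β hβ k
      rw [Equiv.Perm.coe_pow]
      exact hβ.iterate k
    cases n with
    | ofNat k => exact hc α.toEquiv α.continuous k
    | negSucc k =>
      have h := hc (α.toEquiv⁻¹) α.symm.continuous (k + 1)
      rw [inv_pow] at h
      exact h
  obtain ⟨n, hn⟩ := nonempty_interior_of_iUnion_of_closed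
    (f := fun n : ℤ => (zIter α.toEquiv n) ⁻¹' {θs})
    (fun n => isClosed_singleton.preimage (hzc n))
    (by
      ext θ
      simp only [mem_iUnion, mem_preimage, mem_singleton_iff, mem_univ, iff_true]
      exact hcon θ)
  obtain ⟨θ, hθ⟩ := hn
  have hopen : (zIter α.toEquiv n) ⁻¹' {θs} ∈ nhds θ := mem_interior_iff_mem_nhds.1 hθ
  have hθs : zIter α.toEquiv n θ = θs := (interior_subset hθ : θ ∈ (zIter α.toEquiv n) ⁻¹' {θs})
  have hback : zIter α.toEquiv (-n) θs = θ := by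
    rw [← hθs]; simp [zIter]
  have h2 : (zIter α.toEquiv (-n)) ⁻¹' ((zIter α.toEquiv n) ⁻¹' {θs}) ∈ nhds θs :=
    (hzc (-n)).continuousAt (by rw [hback]; exact hopen)
  obtain ⟨ε, hε, hb⟩ := Metric.mem_nhds_iff.1 h2
  obtain ⟨θ', hne, hd⟩ := hnoniso ε hε
  have := hb (Metric.mem_ball.2 hd)
  simp [zIter] at this
  exact hne this

lemma bu_main {Θ : Type} [MetricSpace Θ] [CompactSpace Θ]
    (α : Θ ≃ₜ Θ) (θs : Θ)
    (haper : ∀ n : ℤ, n ≠ 0 → zIter α.toEquiv n θs ≠ θs)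
    (hnoniso : ∀ ε > (0 : ℝ), ∃ θ : Θ, θ ≠ θs ∧ dist θ θs < ε)
    {a b : ℝ}
    (f : Θ × ↥(Icc a b) → Θ × ↥(Icc a b)) (hf : ForcedIncreasing (⇑α) f)
    (γ : Θ → ↥(Icc a b)) (hγc : Continuous γ) (hγint : ∀ θ : Θ, (γ θ : ℝ) ∈ Ioo a b)
    (hγinv : ∀ θ : Θ, f (θ, γ θ) = (α θ, γ (α θ))) :
    ∃ fhat h : Θ × ↥(Icc a b) → Θ × ↥(Icc a b),
      BlowUpConclusion (⇑α) f γ fhat h ∧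
      IsClosed (h ⁻¹' curveGraph γ) ∧
      fhat '' (h ⁻¹' curveGraph γ) ⊆ h ⁻¹' curveGraph γ ∧
      Pinched (h ⁻¹' curveGraph γ) ∧
      Prod.fst '' (h ⁻¹' curveGraph γ) = Set.univ := by
  classical
  have hab : a < b := (hγint θs).1.trans (hγint θs).2
  obtain ⟨P, hPc, hP0, hPf, hP1, hPm, hPγ⟩ := bu_family α hab.le f hf γ hγinv
  obtain ⟨φ, hφc, hφm, hφ0, hφ1, u, v, hu, hv, hul, hvl, hu0, hv1⟩ :=
    bu_phi θs hnoniso (fun θ => (γ θ : ℝ)) (continuous_subtype_val.comp hγc)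
  have hPs : ∀ n θ x, P n (θ, x) = (θs, (γ θs : ℝ)) ↔
      x = γ θ ∧ zIter α.toEquiv (-n) θ = θs := by
    intro n θ x
    constructor
    · intro h
      refine ⟨(hPγ n θ x).1 (by rw [h]), ?_⟩
      rw [← hP1 n (θ, x), h]
    · rintro ⟨h1, h2⟩
      have h3 := (hPγ n θ x).2 h1
      have h4 := hP1 n (θ, x)
      rw [h2] at h4
      rw [h4] at h3
      exact Prod.ext h4 h3
  have D : BUData a b P φ θs (γ θs) :=
    { hPc := hPc
      hPm := hPm
      hPf := fun n θ x x' => by rw [hP1, hP1]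
      hPu := by
        rintro m n ⟨θ, x⟩ h1 h2
        have e1 := ((hPs m θ x).1 h1).2
        have e2 := ((hPs n θ x).1 h2).2
        by_contra hmn
        refine haper (n - m) (fun h => hmn (by omega)) ?_
        have e3 : θ = (α.toEquiv ^ n : Equiv.Perm Θ) θs := by
          rw [← e2]; simp [zIter]
        have e4 : (α.toEquiv ^ (-m) : Equiv.Perm Θ) θ = θs := e1
        rw [e3, ← Equiv.Perm.mul_apply, ← zpow_add] at e4
        rw [zIter, sub_eq_neg_add]
        exact e4
      hPa := fun n θ h => by
        have := ((hPs n θ a).1 h).1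
        have := (hγint θ).1
        linarith
      hPb := fun n θ h => by
        have := ((hPs n θ b).1 h).1
        have := (hγint θ).2
        linarith
      hφc := hφc
      hφm := hφm
      hφ0 := hφ0
      hφ1 := hφ1 }
  let E := buE a b P φ (θs, (γ θs : ℝ))
  obtain ⟨Y, hY1, hYm⟩ : ∃ Y : ↥E ≃ₜ Θ × ↥(Icc a b), (∀ e, (Y e).1 = e.1.1) ∧
      ∀ e e', e.1.1 = e'.1.1 → e.1.2 < e'.1.2 → (Y e).2 < (Y e').2 := bu_core hab D
  have hS1 : ∀ q, (Y.symm q).1.1 = q.1 := by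
    intro q
    rw [← hY1, Y.apply_symm_apply]
  have hmem : ∀ q, (q.1, (Y.symm q).1.2) ∈ E := by
    intro q
    have := (Y.symm q).2
    rw [← hS1 q]; exact this
  have hSm : ∀ θ, StrictMono fun x => (Y.symm (θ, x)).1.2 := by
    intro θ x x' hx
    have hno : ¬ (Y.symm (θ, x')).1.2 ≤ (Y.symm (θ, x)).1.2 := by
      intro hle
      rcases hle.lt_or_eq with h | h
      · have := hYm _ _ ((hS1 (θ, x')).trans (hS1 (θ, x)).symm) h
        rw [Y.apply_symm_apply, Y.apply_symm_apply] at this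
        exact lt_asymm hx this
      · have h2 : Y.symm (θ, x') = Y.symm (θ, x) :=
          Subtype.ext (Prod.ext ((hS1 (θ, x')).trans (hS1 (θ, x)).symm) h)
        have := congrArg Prod.snd (Y.symm.injective h2)
        simp only at this
        rw [this] at hx
        exact lt_irrefl _ hx
    rcases bu_total D (hmem (θ, x)) (hmem (θ, x')) with h | h
    · exact lt_of_le_not_ge h hno
    · exact absurd h hno
  let T : E → E := fun e => ⟨((f (e.1.1, e.1.2.1)).1, (f (e.1.1, e.1.2.1)).2,
    fun n => e.1.2.2 (n - 1)), by
      intro n hn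
      simp only at hn ⊢
      rw [hPf n (e.1.1, e.1.2.1)] at hn ⊢
      exact e.2 (n - 1) hn⟩
  have hTc : Continuous T := by
    have cE : Continuous fun e : E => (e.1.1, e.1.2.1) :=
      (continuous_fst.comp continuous_subtype_val).prodMk
        (continuous_fst.comp (continuous_snd.comp continuous_subtype_val))
    have cf := hf.1.comp cE
    refine Continuous.subtype_mk ?_ _
    refine (continuous_fst.comp cf).prodMk ((continuous_snd.comp cf).prodMk ?_)
    exact continuous_pi fun n => (continuous_apply (n - 1)).comp
      (continuous_snd.comp (continuous_snd.comp continuous_subtype_val))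
  let h : Θ × ↥(Icc a b) → Θ × ↥(Icc a b) := fun q => ((Y.symm q).1.1, (Y.symm q).1.2.1)
  let fhat : Θ × ↥(Icc a b) → Θ × ↥(Icc a b) := fun q => Y (T (Y.symm q))
  have hhY : ∀ e : E, h (Y e) = (e.1.1, e.1.2.1) := by
    intro e; simp only [h, Y.symm_apply_apply]
  have hhc : Continuous h :=
    (continuous_fst.comp (continuous_subtype_val.comp Y.symm.continuous)).prodMk
      (continuous_fst.comp (continuous_snd.comp (continuous_subtype_val.comp Y.symm.continuous)))
  have hcanon : ∀ p : Θ × ↥(Icc a b), (p.1, p.2, fun n => φ (P n (p.1, (p.2 : ℝ)))) ∈ E :=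
    fun p n _ => rfl
  have hsurj : Surjective h := by
    intro p
    exact ⟨Y ⟨_, hcanon p⟩, hhY _⟩
  have hcomm : ∀ q, h (fhat q) = f (h q) := by
    intro q
    simp only [fhat, hhY]
    rfl
  have hh1 : ∀ q, (h q).1 = q.1 := fun q => hS1 q
  -- points without orbit hits have a unique preimage
  have huniq : ∀ q q', h q = h q' →
      (∀ n, P n ((h q).1, ((h q).2 : ℝ)) ≠ (θs, (γ θs : ℝ))) → q = q' := by
    intro q q' hqq hn
    apply Y.symm.injective
    apply Subtype.ext
    have e1 : (Y.symm q).1.1 = (Y.symm q').1.1 := congrArg (fun z : Θ × ↥(Icc a b) => z.1) hqq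
    have e2 : (Y.symm q).1.2.1 = (Y.symm q').1.2.1 := congrArg Prod.snd hqq
    refine Prod.ext e1 (Prod.ext e2 (funext fun n => ?_))
    have h1 := (Y.symm q).2 n (hn n)
    have hn' := hn n
    rw [hqq] at hn'
    have h2 := (Y.symm q').2 n hn'
    rw [h1, h2, e1, e2]
  have hclosed : IsClosed (curveGraph γ) :=
    isClosed_eq continuous_snd (hγc.comp continuous_fst)
  refine ⟨fhat, h, ⟨⟨hhc, hsurj, funext hcomm⟩, hh1, ⟨?_, ?_, ?_⟩, ?_, ?_, ?_, ?_⟩, ?_, ?_, ?_, ?_⟩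
  · exact Y.continuous.comp (hTc.comp Y.symm.continuous)
  · intro q
    simp only [fhat, hY1]
    change (f ((Y.symm q).1.1, (Y.symm q).1.2.1)).1 = _
    rw [hf.2.1, hS1]
  · intro θ x x' hx
    have hlt := hSm θ hx
    simp only at hlt
    have e1 := hS1 (θ, x)
    have e2 := hS1 (θ, x')
    simp only at e1 e2
    refine hYm _ _ ?_ ?_
    · change (f ((Y.symm (θ, x)).1.1, (Y.symm (θ, x)).1.2.1)).1 =
        (f ((Y.symm (θ, x')).1.1, (Y.symm (θ, x')).1.2.1)).1
      rw [hf.2.1, hf.2.1, e1, e2]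
    · change ((f ((Y.symm (θ, x)).1.1, (Y.symm (θ, x)).1.2.1)).2,
          fun n => (Y.symm (θ, x)).1.2.2 (n - 1)) <
        ((f ((Y.symm (θ, x')).1.1, (Y.symm (θ, x')).1.2.1)).2,
          fun n => (Y.symm (θ, x')).1.2.2 (n - 1))
      rw [e1, e2]
      refine lt_of_le_of_ne ⟨(hf.2.2 θ).monotone hlt.le.1, fun n => hlt.le.2 (n - 1)⟩ ?_
      intro heq
      refine hlt.ne (Prod.ext ((hf.2.2 θ).injective (congrArg Prod.fst heq)) (funext fun n => ?_))
      have := congrFun (congrArg Prod.snd heq) (n + 1)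
      simpa using this
  · intro θ x x' hx
    exact ((hSm θ).monotone hx).1
  · intro q hq q' _ hqq
    refine huniq q q' hqq fun n hn => hq ?_
    exact Subtype.ext ((hPs n _ _).1 hn).1
  · refine ⟨{p | p ∈ curveGraph γ ∧ ∃ n : ℤ, zIter α.toEquiv (-n) p.1 = θs}, fun p hp => hp.1,
      ?_, ?_, ?_⟩
    · refine (countable_range fun n : ℤ => (zIter α.toEquiv n θs, γ (zIter α.toEquiv n θs))).mono ?_
      rintro ⟨θ, x⟩ ⟨hx, n, hn⟩
      have hθ : zIter α.toEquiv n θs = θ := by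
        simp only at hn
        rw [← hn]; simp [zIter]
      have hx' : x = γ θ := hx
      refine ⟨n, ?_⟩
      simp only [hθ, hx']
    · rintro ⟨θ, x⟩ ⟨hx, n, hn⟩
      have hx' : x = γ θ := hx
      subst hx'
      simp only at hn
      have hPn : P n (θ, (γ θ : ℝ)) = (θs, (γ θs : ℝ)) := (hPs _ _ _).2 ⟨rfl, hn⟩
      let τ : unitInterval → ℤ → unitInterval :=
        fun s => Function.update (fun m => φ (P m (θ, (γ θ : ℝ)))) n s
      have hτ : ∀ s, (θ, γ θ, τ s) ∈ E := by
        intro s m hm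
        have hmn : m ≠ n := fun hh => hm (by rw [hh]; exact hPn)
        simp [τ, Function.update_of_ne hmn]
      let e : unitInterval → E := fun s => ⟨(θ, γ θ, τ s), hτ s⟩
      have hYe : ∀ s, Y (e s) = (θ, (Y (e s)).2) := fun s => Prod.ext (hY1 _) rfl
      have hsY : ∀ s, (Y.symm (θ, (Y (e s)).2)).1.2 = (γ θ, τ s) := by
        intro s
        rw [← hYe, Y.symm_apply_apply]
      refine ⟨(Y (e 0)).2, (Y (e 1)).2, ?_, ?_⟩
      · refine hYm _ _ rfl (Prod.lt_iff.2 (Or.inr ⟨le_rfl, Pi.lt_def.2 ⟨?_, n, ?_⟩⟩))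
        · exact update_le_update_iff.2 ⟨zero_le_one, fun _ _ => le_rfl⟩
        · simp [e, τ]
      · ext ⟨θ', y⟩
        simp only [mem_preimage, mem_singleton_iff, mem_prod, mem_Icc]
        constructor
        · intro hy
          have hθ' : θ' = θ := by
            have h0 := hh1 (θ', y)
            rw [hy] at h0
            exact h0.symm
          subst hθ'
          have hy2 : (Y.symm (θ', y)).1.2.1 = γ θ' := congrArg Prod.snd hy
          have hm := hmem (θ', y)
          have hval : ∀ m, m ≠ n → (Y.symm (θ', y)).1.2.2 m = φ (P m (θ', (γ θ' : ℝ))) := by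
            intro m hmn
            have := hm m
            simp only [hy2] at this
            exact this (fun hh => hmn (D.hPu _ _ _ hh hPn))
          refine ⟨rfl, (hSm θ').le_iff_le.1 ?_, (hSm θ').le_iff_le.1 ?_⟩
          · simp only [hsY]
            refine ⟨hy2.ge, update_le_iff.2 ⟨bot_le, fun m hmn => (hval m hmn).ge⟩⟩
          · simp only [hsY]
            refine ⟨hy2.le, le_update_iff.2 ⟨le_top, fun m hmn => (hval m hmn).le⟩⟩
        · rintro ⟨rfl, h1, h2⟩
          have g1 := ((hSm θ').monotone h1).1
          have g2 := ((hSm θ').monotone h2).1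
          simp only [hsY] at g1 g2
          exact Prod.ext (hh1 _) (le_antisymm g2 g1)
    · rintro p ⟨hp, hpC⟩
      obtain ⟨q, hq⟩ := hsurj p
      refine ⟨q.2, ?_⟩
      have hq1 : (p.1, q.2) = q := Prod.ext (by rw [← hq, hh1]) rfl
      rw [hq1]
      ext q'
      simp only [mem_preimage, mem_singleton_iff]
      constructor
      · intro hq'
        refine huniq q' q (hq'.trans hq.symm) fun n hn => hpC ⟨hp, n, ?_⟩
        rw [hq'] at hn
        exact ((hPs _ _ _).1 hn).2
      · rintro rfl; exact hq
  · intro η hη hsub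
    let t0 : Θ → unitInterval := fun θ => (Y.symm (θ, η θ)).1.2.2 0
    have ht0 : Continuous t0 := by
      have c1 : Continuous fun θ => (Y.symm (θ, η θ)).1 :=
        continuous_subtype_val.comp (Y.symm.continuous.comp (continuous_id.prodMk hη))
      exact (continuous_apply (0 : ℤ)).comp (continuous_snd.comp (continuous_snd.comp c1))
    have hval : ∀ θ, θ ≠ θs → t0 θ = φ (θ, (γ θ : ℝ)) := by
      intro θ hθ
      have h1 : h (θ, η θ) ∈ curveGraph γ := hsub (show (θ, η θ) ∈ curveGraph η from rfl)
      have h2 : (Y.symm (θ, η θ)).1.2.1 = γ (Y.symm (θ, η θ)).1.1 := h1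
      have h4 : (Y.symm (θ, η θ)).1.1 = θ := hS1 _
      have h3 := (Y.symm (θ, η θ)).2 0
      rw [h2, h4, hP0] at h3
      exact h3 (fun hh => hθ (congrArg Prod.fst hh))
    have l0 : t0 θs = 0 := by
      refine tendsto_nhds_unique ((ht0.tendsto θs).comp hul) ?_
      have : t0 ∘ u = fun _ => 0 := by
        funext n; simp only [comp_apply]; rw [hval _ (hu n), hu0]
      rw [this]; exact tendsto_const_nhds
    have l1 : t0 θs = 1 := by
      refine tendsto_nhds_unique ((ht0.tendsto θs).comp hvl) ?_
      have : t0 ∘ v = fun _ => 1 := by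
        funext n; simp only [comp_apply]; rw [hval _ (hv n), hv1]
      rw [this]; exact tendsto_const_nhds
    exact zero_ne_one (l0.symm.trans l1)
  · exact hclosed.preimage hhc
  · rintro _ ⟨q, hq, rfl⟩
    have hq' : (h q).2 = γ (h q).1 := hq
    have hq2 : h q = ((h q).1, γ (h q).1) := Prod.ext rfl hq'
    change h (fhat q) ∈ curveGraph γ
    rw [hcomm, hq2, hγinv]
    rfl
  · obtain ⟨θ, hθ⟩ := bu_off_orbit α θs hnoniso
    obtain ⟨q, hq⟩ := hsurj (θ, γ θ)
    have hq1 : q.1 = θ := by rw [← hh1, hq]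
    have hq2 : (θ, q.2) = q := Prod.ext hq1.symm rfl
    refine ⟨θ, q.2, ?_, ?_⟩
    · change h (θ, q.2) ∈ curveGraph γ
      rw [hq2, hq]; rfl
    · intro y hy
      have hy1 : (h (θ, y)).2 = γ (h (θ, y)).1 := hy
      have hy2 : h (θ, y) = (θ, γ θ) := by
        refine Prod.ext (hh1 _) ?_
        rw [hy1, hh1]
      have := huniq (θ, y) q (hy2.trans hq.symm) (fun n hn => by
        rw [hy2] at hn
        exact hθ _ ((hPs _ _ _).1 hn).2)
      rw [← this]
  · ext θ
    simp only [mem_univ, iff_true]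
    obtain ⟨q, hq⟩ := hsurj (θ, γ θ)
    refine ⟨q, ?_, by rw [← hh1, hq]⟩
    change h q ∈ curveGraph γ
    rw [hq]; rfl

/-- the blow-up construction over an arbitrary homeomorphism of a compact
metric space possessing a non-isolated aperiodic point: properties (i)-(v) still hold and
`h⁻¹(Γ)` is a closed invariant pinched set projecting onto the whole base. -/
theorem stmt16 {Θ : Type} [MetricSpace Θ] [CompactSpace Θ]
    (α : Θ ≃ₜ Θ) (θs : Θ)
    (haper : ∀ n : ℤ, n ≠ 0 → zIter α.toEquiv n θs ≠ θs)
    (hnoniso : ∀ ε > (0 : ℝ), ∃ θ : Θ, θ ≠ θs ∧ dist θ θs < ε)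
    {I : Set ℝ} (hIcomp : IsCompact I) (hIconn : I.OrdConnected)
    (f : Θ × ↥I → Θ × ↥I) (hf : ForcedIncreasing (⇑α) f)
    (γ : Θ → ↥I) (hγc : Continuous γ) (hγint : ∀ θ : Θ, (γ θ : ℝ) ∈ interior I)
    (hγinv : ∀ θ : Θ, f (θ, γ θ) = (α θ, γ (α θ))) :
    ∃ fhat h : Θ × ↥I → Θ × ↥I,
      BlowUpConclusion (⇑α) f γ fhat h ∧
      IsClosed (h ⁻¹' curveGraph γ) ∧
      fhat '' (h ⁻¹' curveGraph γ) ⊆ h ⁻¹' curveGraph γ ∧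
      Pinched (h ⁻¹' curveGraph γ) ∧
      Prod.fst '' (h ⁻¹' curveGraph γ) = Set.univ := by
  have hne : I.Nonempty := ⟨_, (γ θs).2⟩
  obtain ⟨a, b, rfl⟩ : ∃ a b, I = Icc a b :=
    ⟨sInf I, sSup I, subset_antisymm
      (fun x hx => ⟨csInf_le hIcomp.bddBelow hx, le_csSup hIcomp.bddAbove hx⟩)
      (hIconn.out (hIcomp.sInf_mem hne) (hIcomp.sSup_mem hne))⟩
  exact bu_main α θs haper hnoniso f hf γ hγc (fun θ => by simpa using hγint θ) hγinv

end
end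

section
/- Let R be an irrational rotation of T¹ with rotation number ρ, and let f₀ be a circle homeomorphism of Denjoy type with irrational rotation number β and unique minimal set the Cantor set M̂ ⊆ T¹, where 1, ρ, β are rationally independent. Then the direct product F = R × f₀ on T² = T¹ × T¹ has a unique minimal set, namely M = T¹ × M̂; M is not pinched (M_θ = M̂ is uncountable for every θ), but M is almost automorphic: the irrational translation (θ,x) ↦ (θ+ρ, x+β) of T² is an almost periodic almost 1-1 factor of F|_M. -/
open Set Function MeasureTheory

noncomputable section

/-- Two-dimensional Kronecker theorem. -/
theorem aux_kron (ρ β : ℝ) (hindep : LinearIndependent ℚ ![(1 : ℝ), ρ, β]) :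
    DenseRange (fun n : ℕ => n • (((ρ : T1), (β : T1)) : T1 × T1)) := by
  have hrel : ∀ a b c : ℤ, (a : ℝ) + b * ρ + c * β = 0 → a = 0 ∧ b = 0 ∧ c = 0 := by
    intro a b c h
    have := Fintype.linearIndependent_iff.1 hindep ![(a : ℚ), b, c] (by
      simp [Fin.sum_univ_three, Rat.smul_def]; linarith)
    have h0 := this 0
    have h1 := this 1
    have h2 := this 2
    simp at h0 h1 h2
    exact ⟨h0, h1, h2⟩
  rw [← denseRange_zsmul_iff_nsmul]
  rw [DenseRange, Metric.dense_iff]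
  rintro ⟨x, y⟩ r hr
  induction x using QuotientAddGroup.induction_on with | H x => ?_
  induction y using QuotientAddGroup.induction_on with | H y => ?_
  -- recurrence
  have hrec := mapClusterPt_zero_atTop_nsmul (((ρ : T1), (β : T1)) : T1 × T1)
  have hfr := (mapClusterPt_iff_frequently.1 hrec) _ (Metric.ball_mem_nhds 0 (half_pos hr))
  obtain ⟨n, hn1, hn⟩ := (Filter.frequently_atTop.1 hfr) 1
  have hnb : ‖((n * ρ : ℝ) : T1)‖ < r / 2 ∧ ‖((n * β : ℝ) : T1)‖ < r / 2 := by
    have : dist (n • (((ρ : T1), (β : T1)) : T1 × T1)) 0 < r / 2 := hn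
    rw [dist_zero_right, Prod.norm_def] at this
    have := max_lt_iff.1 this
    simpa [← nsmul_eq_mul] using this
  rw [AddCircle.norm_eq, AddCircle.norm_eq] at hnb
  simp only [inv_one, one_mul, mul_one] at hnb
  set a := round ((n : ℝ) * ρ)
  set b := round ((n : ℝ) * β)
  obtain ⟨hv1, hv2⟩ := hnb
  set v1 : ℝ := n * ρ - a with hv1d
  set v2 : ℝ := n * β - b with hv2d
  have hn0 : (n : ℤ) ≠ 0 := by omega
  have hv1ne : v1 ≠ 0 := by
    intro h
    have := hrel (-a) n 0 (by push_cast; linarith)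
    exact hn0 this.2.1
  have hirr : Irrational (v2 / v1) := by
    rintro ⟨q, hq⟩
    have hq' : (q.num : ℝ) * v1 = q.den * v2 := by
      have hd : (q.den : ℝ) ≠ 0 := by exact_mod_cast q.den_nz
      rw [Rat.cast_def, div_eq_div_iff hd hv1ne] at hq
      linarith
    have := hrel (q.den * b - q.num * a) (q.num * n) (-(q.den * n)) (by
      push_cast; rw [hv1d, hv2d] at hq'; linarith)
    have h3 := this.2.2
    simp at h3
    omega
  have hdr : DenseRange (fun k : ℤ => k • ((v2 / v1 : ℝ) : T1)) :=
    AddCircle.denseRange_zsmul_coe_iff.2 (by simpa using hirr)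
  obtain ⟨k, hk⟩ := hdr.exists_dist_lt (((y - x * (v2 / v1) : ℝ)) : T1) (half_pos hr)
  set t : ℝ := (x + k) / v1 with ht
  set m : ℤ := round t with hm
  have hmt : |t - m| ≤ 1 := (abs_sub_round t).trans (by norm_num)
  refine ⟨((m * n : ℤ) • (((ρ : T1), (β : T1)) : T1 × T1)), ?_, ⟨m * n, rfl⟩⟩
  have htv : t * v1 = x + k := by rw [ht]; field_simp
  have htv2 : t * v2 = x * (v2 / v1) + k * (v2 / v1) := by rw [ht]; field_simp
  have hT : ∀ z : ℝ, ‖(z : T1)‖ ≤ |z| := fun z => QuotientAddGroup.norm_mk_le_norm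
  have hi : ∀ i : ℤ, ((i : ℝ) : T1) = 0 := fun i => by
    rw [AddCircle.coe_eq_zero_iff]; exact ⟨i, by simp⟩
  have hred1 : (m * n : ℤ) • (ρ : T1) = ((m * v1 : ℝ) : T1) := by
    have e : (m * v1 : ℝ) = (m * n : ℤ) • ρ - ((m * a : ℤ) : ℝ) := by
      rw [hv1d]; push_cast [zsmul_eq_mul]; ring
    rw [e, AddCircle.coe_sub, hi, sub_zero, AddCircle.coe_zsmul]
  have hred2 : (m * n : ℤ) • (β : T1) = ((m * v2 : ℝ) : T1) := by
    have e : (m * v2 : ℝ) = (m * n : ℤ) • β - ((m * b : ℤ) : ℝ) := by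
      rw [hv2d]; push_cast [zsmul_eq_mul]; ring
    rw [e, AddCircle.coe_sub, hi, sub_zero, AddCircle.coe_zsmul]
  have hsmall : ∀ v : ℝ, |v| < r / 2 → ‖(((m - t) * v : ℝ) : T1)‖ < r / 2 := by
    intro v hv
    refine (hT _).trans_lt ?_
    rw [abs_mul, abs_sub_comm]
    nlinarith [abs_nonneg v, abs_nonneg (t - m)]
  rw [Metric.mem_ball, Prod.dist_eq]
  refine max_lt ?_ ?_
  · show dist ((m * n : ℤ) • (ρ : T1)) (x : T1) < r
    have e : (m * v1 : ℝ) = x + ((k : ℝ) + (m - t) * v1) := by linarith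
    rw [hred1, e, dist_eq_norm, AddCircle.coe_add, add_sub_cancel_left, AddCircle.coe_add, hi, zero_add]
    linarith [hsmall v1 hv1]
  · show dist ((m * n : ℤ) • (β : T1)) (y : T1) < r
    have e : (m * v2 : ℝ) = (k • (v2 / v1)) + x * (v2 / v1) + (m - t) * v2 := by
      rw [zsmul_eq_mul]; linarith
    rw [dist_comm, dist_eq_norm] at hk
    have e2 : ((m * n : ℤ) • (β : T1)) - (y : T1) =
        (k • ((v2 / v1 : ℝ) : T1) - ((y - x * (v2 / v1) : ℝ) : T1))
          + (((m - t) * v2 : ℝ) : T1) := by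
      rw [hred2, e, ← AddCircle.coe_zsmul, ← AddCircle.coe_sub, ← AddCircle.coe_sub,
        ← AddCircle.coe_add]
      congr 1; ring
    rw [dist_eq_norm, e2]
    linarith [norm_add_le (k • ((v2 / v1 : ℝ) : T1) - ((y - x * (v2 / v1) : ℝ) : T1))
      ((((m - t) * v2 : ℝ) : T1)), hsmall v2 hv2]

/-- Closed nonempty forward invariant sets of a dense translation are everything. -/
theorem aux_inv {G : Type*} [AddCommGroup G] [TopologicalSpace G] [IsTopologicalAddGroup G]
    (g : G) (hg : DenseRange (fun n : ℕ => n • g)) (S : Set G) (hne : S.Nonempty)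
    (hc : IsClosed S) (hS : ∀ p ∈ S, p + g ∈ S) : S = univ := by
  obtain ⟨p, hp⟩ := hne
  have hn : ∀ n : ℕ, p + n • g ∈ S := by
    intro n
    induction n with
    | zero => simpa using hp
    | succ n ih => rw [succ_nsmul, ← add_assoc]; exact hS _ ih
  have hd : DenseRange (fun n : ℕ => p + n • g) :=
    (Homeomorph.addLeft p).surjective.denseRange.comp hg (Homeomorph.addLeft p).continuous
  rw [← hc.closure_eq]
  exact (hd.mono (by rintro _ ⟨n, rfl⟩; exact hn n)).closure_eq

/-- The semiconjugacy to the rotation. -/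
theorem aux_semi (β : ℝ) (hirr : Irrational β) (f₀ : T1 ≃ₜ T1)
    (hβ : ∃ F : CircleDeg1Lift, (∀ t : ℝ, ((F t : ℝ) : T1) = f₀ ((t : ℝ) : T1)) ∧
      F.translationNumber = β) :
    ∃ h : T1 → T1, Continuous h ∧ (∀ x, h (f₀ x) = h x + (β : T1)) ∧
      Dense {y : T1 | ∀ x x', h x = y → h x' = y → x = x'} := by
  obtain ⟨F, hF, rfl⟩ := hβ
  set β := F.translationNumber
  have hcoe : ∀ x y : ℝ, (x : T1) = (y : T1) → ∃ k : ℤ, x = y + k := by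
    intro x y h
    rw [← sub_eq_zero, ← AddCircle.coe_sub, AddCircle.coe_eq_zero_iff] at h
    obtain ⟨k, hk⟩ := h
    exact ⟨k, by simp at hk; linarith⟩
  have hi : ∀ i : ℤ, ((i : ℝ) : T1) = 0 := fun i => by
    rw [AddCircle.coe_eq_zero_iff]; exact ⟨i, by simp⟩
  have hbij : Bijective F := by
    constructor
    · intro s t hst
      have h1 : (s : T1) = t := f₀.injective (by rw [← hF, ← hF, hst])
      obtain ⟨k, rfl⟩ := hcoe _ _ h1
      rw [F.map_add_int] at hst
      have : (k : ℝ) = 0 := by linarith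
      rw [this, add_zero]
    · intro y
      obtain ⟨x, hx⟩ := f₀.surjective (y : T1)
      induction x using QuotientAddGroup.induction_on with | H x => ?_
      have := (hF x).trans hx
      obtain ⟨k, hk⟩ := hcoe _ _ this
      exact ⟨x - k, by rw [F.map_sub_int, hk]; ring⟩
  have hu := CircleDeg1Lift.isUnit_iff_bijective.2 hbij
  obtain ⟨H, hH⟩ := CircleDeg1Lift.semiconj_of_isUnit_of_translationNumber_eq hu
    (f₂ := ((CircleDeg1Lift.translate (Multiplicative.ofAdd β) : CircleDeg1Liftˣ) : CircleDeg1Lift))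
    (Units.isUnit _) (by rw [CircleDeg1Lift.translationNumber_translate])
  have hH' : ∀ t, H (F t) = β + H t := by
    intro t
    have := hH t
    simpa using this
  have hdense : DenseRange H := by
    have hd := (dense_addSubgroupClosure_pair_iff (a := β) (b := 1)).2 (by simpa using hirr)
    let S : AddSubgroup ℝ :=
      { carrier := {c | ∀ t, t ∈ range H ↔ t + c ∈ range H}
        zero_mem' := by simp
        add_mem' := by
          intro a b ha hb t
          rw [ha t, hb (t + a), add_assoc]
        neg_mem' := by
          intro a ha t
          rw [ha (t + -a)]; simp }
    have hβS : β ∈ S := by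
      intro t
      constructor
      · rintro ⟨s, rfl⟩; exact ⟨F s, by rw [hH', add_comm]⟩
      · rintro ⟨s, hs⟩
        obtain ⟨u, rfl⟩ := hbij.2 s
        exact ⟨u, by rw [hH'] at hs; linarith⟩
    have h1S : (1 : ℝ) ∈ S := by
      intro t
      constructor
      · rintro ⟨s, rfl⟩; exact ⟨s + 1, H.map_add_one s⟩
      · rintro ⟨s, hs⟩
        exact ⟨s - 1, by have := H.map_sub_nat s 1; push_cast at this; rw [this, hs]; ring⟩
    have hle : AddSubgroup.closure {β, 1} ≤ S := by
      rw [AddSubgroup.closure_le]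
      rintro c (rfl | rfl)
      · exact hβS
      · exact h1S
    have hd2 : Dense (S : Set ℝ) := hd.mono hle
    have hd3 : Dense ((fun c => H 0 + c) '' (S : Set ℝ)) :=
      (Homeomorph.addLeft (H 0)).surjective.denseRange.dense_image
        (Homeomorph.addLeft (H 0)).continuous hd2
    refine hd3.mono ?_
    rintro _ ⟨c, hc, rfl⟩
    exact (hc (H 0)).1 ⟨0, rfl⟩
  have hHc : Continuous H := H.monotone.continuous_of_denseRange hdense
  have hper : Function.Periodic (fun t : ℝ => ((H t : ℝ) : T1)) 1 := by
    intro t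
    show ((H (t + 1) : ℝ) : T1) = _
    rw [H.map_add_one, AddCircle.coe_add]
    have := hi 1
    push_cast at this
    rw [this, add_zero]
  have hlift : ∀ t : ℝ, hper.lift (t : T1) = ((H t : ℝ) : T1) := fun t => hper.lift_coe t
  refine ⟨hper.lift, ?_, ?_, ?_⟩
  · rw [(QuotientAddGroup.isQuotientMap_mk (N := AddSubgroup.zmultiples (1 : ℝ))).continuous_iff]
    exact (AddCircle.continuous_mk' 1).comp hHc
  · intro x
    induction x using QuotientAddGroup.induction_on with | H x => ?_
    have := hF x
    erw [← this, hlift, hlift]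
    rw [hH', AddCircle.coe_add, add_comm]
  · have hcount : (range (fun q : ℚ => H q)).Countable := countable_range _
    have hd := hcount.dense_compl ℝ
    have hd2 : Dense ((fun t : ℝ => (t : T1)) '' (range (fun q : ℚ => H q))ᶜ) :=
      (QuotientAddGroup.mk_surjective (s := AddSubgroup.zmultiples (1 : ℝ))).denseRange.dense_image
        (AddCircle.continuous_mk' 1) hd
    refine hd2.mono ?_
    rintro _ ⟨y, hy, rfl⟩
    have key : ∀ s t : ℝ, H s = y → H t = y → s < t → False := by
      intro s t hs ht hst
      obtain ⟨q, hq1, hq2⟩ := exists_rat_btwn hst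
      refine hy ⟨q, le_antisymm ?_ ?_⟩
      · rw [← ht]; exact H.monotone hq2.le
      · rw [← hs]; exact H.monotone hq1.le
    intro x x' hx hx'
    induction x using QuotientAddGroup.induction_on with | H x => ?_
    induction x' using QuotientAddGroup.induction_on with | H x' => ?_
    obtain ⟨k, hk⟩ := hcoe _ _ ((hlift x).symm.trans hx)
    obtain ⟨k', hk'⟩ := hcoe _ _ ((hlift x').symm.trans hx')
    have e1 : H (x - k) = y := by rw [H.map_sub_int, hk]; ring
    have e2 : H (x' - k') = y := by rw [H.map_sub_int, hk']; ring
    have e : x - k = x' - k' := by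
      rcases lt_trichotomy (x - k) (x' - k') with h | h | h
      · exact (key _ _ e1 e2 h).elim
      · exact h
      · exact (key _ _ e2 e1 h).elim
    have e3 := congrArg (fun t : ℝ => (t : T1)) e
    simp only [AddCircle.coe_sub, hi, sub_zero] at e3
    exact e3

/-- the product of an irrational rotation with a Denjoy-type circle
homeomorphism (with rationally independent rotation numbers) has a unique minimal set
`T¹ × M̂`, which is not pinched but is almost automorphic, with the corresponding
irrational translation of the torus as an almost periodic almost 1-1 factor. -/
theorem stmt17 (ρ β : ℝ) (hindep : LinearIndependent ℚ ![(1 : ℝ), ρ, β])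
    (f₀ : T1 ≃ₜ T1) (hden : DenjoyType f₀)
    (hβ : ∃ F : CircleDeg1Lift, (∀ t : ℝ, ((F t : ℝ) : T1) = f₀ ((t : ℝ) : T1)) ∧
      F.translationNumber = β)
    (Mhat : Set T1) (hMmin : IsMinimalSet (⇑f₀) Mhat)
    (hMuniq : ∀ M' : Set T1, IsMinimalSet (⇑f₀) M' → M' = Mhat)
    (hMperf : Perfect Mhat) (hMtd : IsTotallyDisconnected Mhat)
    (F : T1 × T1 → T1 × T1) (hF : F = fun p : T1 × T1 => (p.1 + (ρ : T1), f₀ p.2)) :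
    IsMinimalSet F (Set.univ ×ˢ Mhat) ∧
    (∀ M' : Set (T1 × T1), IsMinimalSet F M' → M' = Set.univ ×ˢ Mhat) ∧
    ¬ Pinched (Set.univ ×ˢ Mhat : Set (T1 × T1)) ∧
    (∀ θ : T1, {x : T1 | (θ, x) ∈ (Set.univ ×ˢ Mhat : Set (T1 × T1))} = Mhat) ∧
    ¬ Mhat.Countable ∧
    (∀ hM : Set.MapsTo F (Set.univ ×ˢ Mhat) (Set.univ ×ˢ Mhat),
      AlmostPeriodicMap (fun p : T1 × T1 => (p.1 + (ρ : T1), p.2 + (β : T1))) ∧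
      ∃ hm : ↥(Set.univ ×ˢ Mhat : Set (T1 × T1)) → T1 × T1,
        IsFactorMap (restrictMap hM)
          (fun p : T1 × T1 => (p.1 + (ρ : T1), p.2 + (β : T1))) hm ∧
        AlmostOneOne hm) := by
  have hrel : Irrational β := by
    rintro ⟨q, hq⟩
    have := Fintype.linearIndependent_iff.1 hindep ![-q, 0, 1] (by
      simp [Fin.sum_univ_three, Rat.smul_def, hq]) 2
    simp at this
  obtain ⟨h, hc, hsemi, hgood⟩ := aux_semi β hrel f₀ hβ
  have hkr := aux_kron ρ β hindep
  obtain ⟨hMne, hMcl, hMinv, hMm⟩ := hMmin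
  have hmaps : ∀ x ∈ Mhat, f₀ x ∈ Mhat := fun x hx => hMinv ▸ mem_image_of_mem _ hx
  -- the image in the torus of a closed invariant set is everything
  have himg : ∀ M' : Set (T1 × T1), M'.Nonempty → IsClosed M' → F '' M' ⊆ M' →
      ∀ θ y : T1, ∃ x, (θ, x) ∈ M' ∧ h x = y := by
    intro M' hne hcl hinv θ y
    have hall := aux_inv (((ρ : T1), (β : T1)) : T1 × T1) hkr
      ((fun p : T1 × T1 => (p.1, h p.2)) '' M') (hne.image _)
      (hcl.isCompact.image (by fun_prop)).isClosed (by
        rintro _ ⟨p, hp, rfl⟩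
        exact ⟨F p, hinv ⟨p, hp, rfl⟩, by rw [hF]; simp [hsemi]⟩)
    have : (θ, y) ∈ ((fun p : T1 × T1 => (p.1, h p.2)) '' M') := by rw [hall]; trivial
    obtain ⟨⟨θ', x⟩, hp, he⟩ := this
    simp only [Prod.mk.injEq] at he
    obtain ⟨rfl, rfl⟩ := he
    exact ⟨x, hp, rfl⟩
  have hFinv : F '' (univ ×ˢ Mhat) = univ ×ˢ Mhat := by
    subst hF
    ext ⟨θ, x⟩
    constructor
    · rintro ⟨⟨θ', x'⟩, ⟨-, hx'⟩, he⟩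
      simp only [Prod.mk.injEq] at he
      exact ⟨trivial, he.2 ▸ hmaps _ hx'⟩
    · rintro ⟨-, hx⟩
      have hx2 : x ∈ f₀ '' Mhat := by rw [hMinv]; exact hx
      obtain ⟨x', hx', rfl⟩ := hx2
      exact ⟨(θ - ρ, x'), ⟨trivial, hx'⟩, by simp⟩
  have hMclosed : IsClosed (univ ×ˢ Mhat : Set (T1 × T1)) := isClosed_univ.prod hMcl
  have hMnonempty : (univ ×ˢ Mhat : Set (T1 × T1)).Nonempty := univ_nonempty.prod hMne
  have hsurj : ∀ y : T1, ∃ x ∈ Mhat, h x = y := fun y => by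
    obtain ⟨x, hx, hy⟩ := himg _ hMnonempty hMclosed hFinv.subset 0 y
    exact ⟨x, hx.2, hy⟩
  have hmin : ∀ M' ⊆ (univ ×ˢ Mhat : Set (T1 × T1)), M'.Nonempty → IsClosed M' →
      F '' M' ⊆ M' → M' = univ ×ˢ Mhat := by
    intro M' hsub hne hcl hinv
    obtain ⟨y, hy⟩ := hgood.nonempty
    obtain ⟨x, hx, hxy⟩ := hsurj y
    have hA := hMm (⋂ θ : T1, {x | (θ, x) ∈ M'})
      (fun z hz => (hsub (mem_iInter.1 hz 0)).2)
      ⟨x, mem_iInter.2 fun θ => by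
        obtain ⟨x', hx', hx'y⟩ := himg M' hne hcl hinv θ y
        rw [hy x x' hxy hx'y]; exact hx'⟩
      (isClosed_iInter fun θ => hcl.preimage (by fun_prop))
      (by
        rintro _ ⟨z, hz, rfl⟩
        refine mem_iInter.2 fun θ => hinv ⟨(θ - ρ, z), mem_iInter.1 hz _, ?_⟩
        rw [hF]; simp)
    refine hsub.antisymm ?_
    rintro ⟨θ, z⟩ ⟨-, hz⟩
    rw [← hA] at hz
    exact mem_iInter.1 hz θ
  have hunc : ¬ Mhat.Countable := by
    intro hct
    have h1 : (univ : Set T1).Countable :=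
      (hct.image h).mono fun y _ => by
        obtain ⟨x, hx, hy⟩ := hsurj y
        exact ⟨x, hx, hy⟩
    have h2 : Countable T1 := countable_univ_iff.1 h1
    have h3 : Countable (Ico (0 : ℝ) (0 + 1)) := (AddCircle.equivIco 1 0).symm.injective.countable
    have h4 := (Set.countable_coe_iff.1 h3).measure_zero volume
    simp at h4
  refine ⟨⟨hMnonempty, hMclosed, hFinv, hmin⟩, ?_, ?_, ?_, hunc, ?_⟩
  · rintro M' ⟨hne, hcl, hinv, hm⟩
    have hs : Prod.snd '' M' = Mhat := by
      apply hMuniq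
      refine ⟨hne.image _, (hcl.isCompact.image continuous_snd).isClosed, ?_, ?_⟩
      · conv_rhs => rw [← hinv]
        rw [image_image, image_image, hF]
      · intro N hN hNne hNcl hNinv
        have := hm (M' ∩ Prod.snd ⁻¹' N) inter_subset_left (by
            obtain ⟨z, hz⟩ := hNne
            obtain ⟨p, hp, rfl⟩ := hN hz
            exact ⟨p, hp, hz⟩) (hcl.inter (hNcl.preimage continuous_snd)) (by
            rintro _ ⟨p, ⟨hp, hpN⟩, rfl⟩
            refine ⟨hinv ▸ mem_image_of_mem _ hp, hNinv ⟨p.2, hpN, ?_⟩⟩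
            rw [hF])
        refine hN.antisymm ?_
        rintro _ ⟨p, hp, rfl⟩
        rw [← this] at hp
        exact hp.2
    refine hmin M' (fun p hp => ⟨trivial, hs ▸ mem_image_of_mem _ hp⟩) hne hcl hinv.subset
  · rintro ⟨θ, x, hx, hu⟩
    apply hunc
    refine (countable_singleton x).mono fun z hz => hu z ⟨trivial, hz⟩
  · intro θ; ext x; simp
  · intro hM
    refine ⟨?_, fun p => (p.1.1, h p.1.2), ⟨by fun_prop, ?_, ?_⟩, ?_⟩
    · intro ε hε
      refine ⟨ε, hε, fun y y' hy n => ?_⟩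
      have hiso : Isometry (fun p : T1 × T1 => (p.1 + (ρ : T1), p.2 + (β : T1))) :=
        Isometry.of_dist_eq fun p q => by simp [Prod.dist_eq]
      have hn : ∀ n : ℕ, Isometry
          ((fun p : T1 × T1 => (p.1 + (ρ : T1), p.2 + (β : T1)))^[n]) := by
        intro n
        induction n with
        | zero => exact isometry_id
        | succ n ih => rw [Function.iterate_succ]; exact ih.comp hiso
      rw [(hn n).dist_eq]
      exact hy
    · rintro ⟨θ, y⟩
      obtain ⟨x, hx, rfl⟩ := hsurj y
      exact ⟨⟨(θ, x), ⟨trivial, hx⟩⟩, rfl⟩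
    · funext ⟨p, hp⟩
      simp [restrictMap, hF, hsemi]
    · refine (dense_univ.prod hgood).mono ?_
      rintro ⟨θ, y⟩ ⟨-, hy⟩
      obtain ⟨x, hx, hxy⟩ := hsurj y
      refine ⟨⟨(θ, x), ⟨trivial, hx⟩⟩, by simp [hxy], ?_⟩
      rintro ⟨⟨θ', x'⟩, hp⟩ he
      simp only [Prod.mk.injEq] at he
      obtain ⟨rfl, he⟩ := he
      have := hy x' x he hxy
      subst this
      rfl

end
end
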